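/- arXiv:2407.18863 — 3 statements merged into one kernel-verified Lean document; each statement's English description precedes it below -/
import Mathlib

section
/- Let $S$ be a finite set, let $\overline S=S\sqcup S^{-1}$ be $S$ together with formal inverses, and let $R$ be a set of cyclically reduced words over $\overline S$. Let $\overline R$ be the closure of $R\cup R^{-1}$ under cyclic shifts; a piece is a common prefix of two distinct elements of $\overline R$. Assume that $R$ satisfies the $C'(1/6)$ condition: $|p|<|r|/6$ whenever $r\in\overline R$ and $p$ is a piece which is a subword of $r$. Put $G=\langle S\mid R\rangle$ and let $\mathrm{Cay}(G,S)$ be its Cayley graph, with vertex set $G$ and, for all $g\in G$ and $s\in S$, one edge labelled $s$ from $g$ to $gs$ (so loops and multiple edges are allowed), regarded as a metric graph with its path metric $d$ in which every edge has length $1$. For $Q\ge 1$, a $Q$-quasi-geodesic is a continuous map $\gamma:I\to\mathrm{Cay}(G,S)$ on an interval $I\subseteq\mathbb R$ with $|t-s|/Q-Q\le d(\gamma(s),\gamma(t))\le Q|t-s|+Q$ for all $s,t\in I$; a quasi-geodesic is a $Q$-quasi-geodesic for some $Q\ge 1$. A Morse gauge is a non-decreasing continuous function $M:[1,\infty)\to[0,\infty)$.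 A quasi-geodesic $\gamma$ is $M$-Morse if for all $Q\ge1$ and all $s\le t$ in its domain, every $Q$-quasi-geodesic with endpoints $\gamma(s)$ and $\gamma(t)$ is contained in the closed $M(Q)$-neighbourhood of $\gamma([s,t])$. Let $M$ be a Morse gauge. Then for each integer $N\ge 2$ there exists a constant $D$ (one may take $D=\frac{2N}{N-1}M(N)$) such that the following holds: if $r\in R$ and $w$ is a subword of $r$ such that $|w|\ge |r|/N$ and some edge path in $\mathrm{Cay}(G,S)$ labelled by $w$ (parametrised with unit speed by $[0,|w|]$) is an $M$-Morse quasi-geodesic, then $|r|\le D$. -/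
namespace MorseSC

/-! ### Morse gauges, quasi-geodesics and Morse quasi-geodesics -/

/-- A Morse gauge: a non-decreasing continuous function `[1, ∞) → [0, ∞)`
(the values of `M` outside `[1, ∞)` are irrelevant). -/
def IsMorseGauge (M : ℝ → ℝ) : Prop :=
  MonotoneOn M (Set.Ici 1) ∧ ContinuousOn M (Set.Ici 1) ∧ ∀ t : ℝ, 1 ≤ t → 0 ≤ M t

/-- `γ`, restricted to `I`, is a (continuous) `Q`-quasi-geodesic. -/
def IsQuasiGeodesicOn {X : Type*} [MetricSpace X] (Q : ℝ) (I : Set ℝ) (γ : ℝ → X) : Prop :=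
  ContinuousOn γ I ∧ ∀ s ∈ I, ∀ t ∈ I,
    |t - s| / Q - Q ≤ dist (γ s) (γ t) ∧ dist (γ s) (γ t) ≤ Q * |t - s| + Q

/-- `γ`, restricted to `I`, is an `M`-Morse quasi-geodesic: it is a quasi-geodesic, and every
`Q`-quasi-geodesic `lam : [a, b] → X` from `γ s` to `γ t` stays in the closed
`M Q`-neighbourhood of `γ [s, t]`. -/
def IsMorseQuasiGeodesicOn {X : Type*} [MetricSpace X] (M : ℝ → ℝ) (I : Set ℝ)
    (γ : ℝ → X) : Prop :=
  (∃ Q : ℝ, 1 ≤ Q ∧ IsQuasiGeodesicOn Q I γ) ∧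
  ∀ Q : ℝ, 1 ≤ Q → ∀ s ∈ I, ∀ t ∈ I, s ≤ t →
    ∀ (lam : ℝ → X) (a b : ℝ), a ≤ b → IsQuasiGeodesicOn Q (Set.Icc a b) lam →
      lam a = γ s → lam b = γ t →
      lam '' Set.Icc a b ⊆ Metric.cthickening (M Q) (γ '' Set.Icc s t)

/-! ### Words and small cancellation -/

/-- A word over `S ∪ S⁻¹`; the letter `(s, true)` is `s` and `(s, false)` is `s⁻¹`. -/
abbrev Word (S : Type*) := List (S × Bool)

/-- The closure of `R ∪ R⁻¹` under cyclic shifts. -/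
def symmClosure {S : Type*} (R : Set (Word S)) : Set (Word S) :=
  {w | ∃ r ∈ R, r ~r w ∨ FreeGroup.invRev r ~r w}

/-- A piece: a common prefix of two distinct elements of the symmetrised set of relators. -/
def IsPiece {S : Type*} (R : Set (Word S)) (p : Word S) : Prop :=
  ∃ r₁ ∈ symmClosure R, ∃ r₂ ∈ symmClosure R, r₁ ≠ r₂ ∧ p <+: r₁ ∧ p <+: r₂

/-- `R` consists of cyclically reduced words and satisfies the `C'(lam)` condition. -/
def SmallCancellation {S : Type*} (lam : ℝ) (R : Set (Word S)) : Prop :=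
  (∀ r ∈ R, FreeGroup.IsCyclicallyReduced r) ∧
  ∀ r ∈ symmClosure R, ∀ p : Word S, IsPiece R p → p <:+: r →
    (p.length : ℝ) < lam * (r.length : ℝ)

/-! ### The group `⟨S | R⟩` and its word metric -/

/-- The group `⟨S | R⟩`. -/
abbrev PGroup {S : Type*} (R : Set (Word S)) := PresentedGroup (FreeGroup.mk '' R)

/-- The element of `⟨S | R⟩` represented by a word. -/
def evalWord {S : Type*} (R : Set (Word S)) (w : Word S) : PGroup R :=
  PresentedGroup.mk (FreeGroup.mk '' R) (FreeGroup.mk w)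

/-- The word metric on `⟨S | R⟩`. -/
noncomputable def wordDist {S : Type*} (R : Set (Word S)) (g h : PGroup R) : ℕ :=
  sInf {n : ℕ | ∃ w : Word S, w.length = n ∧ g * evalWord R w = h}

section wordDist

variable {S : Type*} {R : Set (Word S)}

theorem evalWord_append (v w : Word S) :
    evalWord R (v ++ w) = evalWord R v * evalWord R w := by
  unfold evalWord
  rw [← map_mul, FreeGroup.mul_mk]

theorem evalWord_invRev (w : Word S) :
    evalWord R (FreeGroup.invRev w) = (evalWord R w)⁻¹ := by
  unfold evalWord
  rw [← map_inv, FreeGroup.inv_mk]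

theorem evalWord_surjective : Function.Surjective (evalWord R) := by
  intro g
  obtain ⟨x, rfl⟩ := PresentedGroup.mk_surjective _ g
  obtain ⟨w, rfl⟩ := Quot.exists_rep x
  exact ⟨w, rfl⟩

theorem exists_word (g h : PGroup R) :
    ∃ w : Word S, w.length = wordDist R g h ∧ g * evalWord R w = h := by
  have hne : {n : ℕ | ∃ w : Word S, w.length = n ∧ g * evalWord R w = h}.Nonempty := by
    obtain ⟨w, hw⟩ := evalWord_surjective (R := R) (g⁻¹ * h)
    exact ⟨_, w, rfl, by rw [hw]; group⟩
  exact Nat.sInf_mem hne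

theorem wordDist_le {g h : PGroup R} (w : Word S) (hw : g * evalWord R w = h) :
    wordDist R g h ≤ w.length :=
  Nat.sInf_le ⟨w, rfl, hw⟩

theorem wordDist_self (g : PGroup R) : wordDist R g g = 0 :=
  Nat.le_zero.1 (wordDist_le [] (mul_one g))

theorem wordDist_comm (g h : PGroup R) : wordDist R g h = wordDist R h g := by
  have key : ∀ a b : PGroup R, wordDist R a b ≤ wordDist R b a := by
    intro a b
    obtain ⟨w, hl, hw⟩ := exists_word b a
    rw [← hl, ← FreeGroup.invRev_length (L₁ := w)]
    apply wordDist_le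
    rw [evalWord_invRev, ← hw]; group
  exact le_antisymm (key g h) (key h g)

theorem wordDist_triangle (g h k : PGroup R) :
    wordDist R g k ≤ wordDist R g h + wordDist R h k := by
  obtain ⟨v, hv, hv'⟩ := exists_word g h
  obtain ⟨w, hw, hw'⟩ := exists_word h k
  rw [← hv, ← hw, ← List.length_append]
  apply wordDist_le
  rw [evalWord_append, ← mul_assoc, hv', hw']

end wordDist

/-! ### The Cayley graph as a metric space

`Cay(G, S)` has vertex set `G` and, for all `g ∈ G` and `s ∈ S`, one edge labelled `s` from `g`
to `g s` (so loops and multiple edges occur), each a copy of `[0, 1]`. -/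

/-- Names for the points of the Cayley graph: a vertex, or the point with coordinate `t ∈ [0, 1]`
on the edge labelled `s` from `g` to `g s`. -/
inductive PrePoint {S : Type*} (R : Set (Word S)) : Type _ where
  | vertex (g : PGroup R) : PrePoint R
  | edge (g : PGroup R) (s : S) (t : unitInterval) : PrePoint R

namespace PrePoint

variable {S : Type*} {R : Set (Word S)}

/-- The two ends of the closed edge carrying a point (a vertex is its own end, twice). -/
def vert : PrePoint R → Bool → PGroup R
  | vertex g, _ => g
  | edge g _ _, false => g
  | edge g s _, true => g * PresentedGroup.of s

/-- The distances, along the closed edge carrying a point, to its two ends. -/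
def off : PrePoint R → Bool → ℝ
  | vertex _, _ => 0
  | edge _ _ t, false => t
  | edge _ _ t, true => 1 - t

/-- The length of a shortest path between two points which leaves `x` through its end `i` and
reaches `y` through its end `j`. -/
noncomputable def via (x y : PrePoint R) (i j : Bool) : ℝ :=
  x.off i + (wordDist R (x.vert i) (y.vert j) : ℝ) + y.off j

/-- The length of a shortest path between two points which passes through a vertex. -/
noncomputable def viaDist (x y : PrePoint R) : ℝ :=
  min (min (via x y false false) (via x y false true))
    (min (via x y true false) (via x y true true))

open Classical in
/-- The path metric on the Cayley graph, all edges having length one: points on a common edge may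
also be joined inside this edge. -/
noncomputable def pdist : PrePoint R → PrePoint R → ℝ
  | edge g s t, edge h s' t' =>
      if g = h ∧ s = s' then min |(t : ℝ) - t'| (viaDist (edge g s t) (edge h s' t'))
      else viaDist (edge g s t) (edge h s' t')
  | x, y => viaDist x y

/-- `x` and `y` lie on the same edge, with coordinates at distance `c`. -/
def Same (x y : PrePoint R) (c : ℝ) : Prop :=
  ∃ g s, ∃ t t' : unitInterval, x = edge g s t ∧ y = edge g s t' ∧ c = |(t : ℝ) - t'|

theorem off_nonneg (x : PrePoint R) (i : Bool) : 0 ≤ x.off i := by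
  rcases x with g | ⟨g, s, t⟩
  · exact le_rfl
  · cases i
    · exact t.2.1
    · exact sub_nonneg.2 t.2.2

theorem via_nonneg (x y : PrePoint R) (i j : Bool) : 0 ≤ via x y i j := by
  have h1 := off_nonneg x i
  have h2 := off_nonneg y j
  unfold via
  positivity

theorem via_comm (x y : PrePoint R) (i j : Bool) : via x y i j = via y x j i := by
  unfold via
  rw [wordDist_comm]
  ring

theorem viaDist_le (x y : PrePoint R) (i j : Bool) : viaDist x y ≤ via x y i j := by
  cases i <;> cases j <;> simp [viaDist]

theorem exists_via (x y : PrePoint R) : ∃ i j, viaDist x y = via x y i j := by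
  unfold viaDist
  rcases min_choice (min (via x y false false) (via x y false true))
    (min (via x y true false) (via x y true true)) with h | h <;> rw [h]
  · rcases min_choice (via x y false false) (via x y false true) with h | h <;>
      exact ⟨_, _, h⟩
  · rcases min_choice (via x y true false) (via x y true true) with h | h <;>
      exact ⟨_, _, h⟩

theorem pdist_le_via (x y : PrePoint R) (i j : Bool) : pdist x y ≤ via x y i j := by
  refine le_trans ?_ (viaDist_le x y i j)
  rcases x with g | ⟨g, s, t⟩ <;> rcases y with h | ⟨h, s', t'⟩ <;> simp only [pdist, le_refl]
  split_ifs
  · exact min_le_right _ _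
  · exact le_rfl

theorem pdist_le_same {x y : PrePoint R} {c : ℝ} (h : Same x y c) : pdist x y ≤ c := by
  obtain ⟨g, s, t, t', rfl, rfl, rfl⟩ := h
  simp [pdist]

theorem pdist_cases (x y : PrePoint R) :
    (∃ i j, pdist x y = via x y i j) ∨ Same x y (pdist x y) := by
  obtain ⟨i, j, h⟩ := exists_via x y
  rcases x with g | ⟨g, s, t⟩ <;> rcases y with h' | ⟨h', s', t'⟩ <;>
    try exact Or.inl ⟨i, j, h⟩
  by_cases hc : g = h' ∧ s = s'
  · obtain ⟨rfl, rfl⟩ := hc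
    simp only [pdist, and_self, if_true]
    rcases min_choice |(t : ℝ) - t'| (viaDist (edge g s t) (edge g s t')) with h2 | h2
    · exact Or.inr ⟨g, s, t, t', rfl, rfl, h2⟩
    · exact Or.inl ⟨i, j, h2.trans h⟩
  · simp only [pdist, if_neg hc]
    exact Or.inl ⟨i, j, h⟩

theorem Same.symm {x y : PrePoint R} {c : ℝ} (h : Same x y c) : Same y x c := by
  obtain ⟨g, s, t, t', rfl, rfl, rfl⟩ := h
  exact ⟨g, s, t', t, rfl, rfl, abs_sub_comm _ _⟩

theorem Same.vert_eq {x y : PrePoint R} {c : ℝ} (h : Same x y c) (i : Bool) :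
    x.vert i = y.vert i := by
  obtain ⟨g, s, t, t', rfl, rfl, rfl⟩ := h
  cases i <;> rfl

theorem Same.off_le {x y : PrePoint R} {c : ℝ} (h : Same x y c) (i : Bool) :
    x.off i ≤ c + y.off i := by
  obtain ⟨g, s, t, t', rfl, rfl, rfl⟩ := h
  have h1 := le_abs_self ((t : ℝ) - t')
  have h2 := neg_abs_le ((t : ℝ) - t')
  cases i <;> simp only [off] <;> linarith

theorem pdist_self (x : PrePoint R) : pdist x x = 0 := by
  apply le_antisymm
  · rcases x with g | ⟨g, s, t⟩
    · refine (pdist_le_via _ _ false false).trans ?_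
      simp [via, off, vert, wordDist_self]
    · exact pdist_le_same ⟨g, s, t, t, rfl, rfl, by simp⟩
  · rcases pdist_cases x x with ⟨i, j, h⟩ | ⟨g, s, t, t', -, -, h⟩ <;> rw [h]
    · exact via_nonneg _ _ _ _
    · exact abs_nonneg _

theorem pdist_comm (x y : PrePoint R) : pdist x y = pdist y x := by
  have key : ∀ a b : PrePoint R, pdist a b ≤ pdist b a := by
    intro a b
    rcases pdist_cases b a with ⟨i, j, h⟩ | h
    · rw [h, via_comm]
      exact pdist_le_via _ _ _ _
    · exact pdist_le_same h.symm
  exact le_antisymm (key x y) (key y x)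

theorem wordDist_vert_le (y : PrePoint R) (i j : Bool) :
    (wordDist R (y.vert i) (y.vert j) : ℝ) ≤ y.off i + y.off j := by
  have h1 : ∀ (g : PGroup R) (s : S), wordDist R g (g * PresentedGroup.of s) ≤ 1 :=
    fun g s => wordDist_le [(s, true)] rfl
  rcases y with g | ⟨g, s, t⟩
  · simp [vert, off, wordDist_self]
  · have h2 : (wordDist R g (g * PresentedGroup.of s) : ℝ) ≤ 1 := by exact_mod_cast h1 g s
    have h3 := t.2.1
    have h4 := t.2.2
    cases i <;> cases j <;> simp only [vert, off, wordDist_self, Nat.cast_zero]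
    · linarith
    · linarith
    · rw [wordDist_comm]; linarith
    · linarith

theorem pdist_triangle (x y z : PrePoint R) : pdist x z ≤ pdist x y + pdist y z := by
  rcases pdist_cases x y with ⟨i, j, h⟩ | h <;> rcases pdist_cases y z with ⟨k, l, h'⟩ | h'
  · refine (pdist_le_via x z i l).trans ?_
    rw [h, h']
    have e1 := wordDist_vert_le y j k
    have e2 : (wordDist R (x.vert i) (z.vert l) : ℝ) ≤ wordDist R (x.vert i) (y.vert j) +
        (wordDist R (y.vert j) (y.vert k) + wordDist R (y.vert k) (z.vert l)) := by
      exact_mod_cast (wordDist_triangle _ (y.vert j) _).trans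
        (Nat.add_le_add_left (wordDist_triangle _ (y.vert k) _) _)
    unfold via
    linarith
  · refine (pdist_le_via x z i j).trans ?_
    have e := h'.symm.off_le j
    rw [h]
    unfold via
    rw [← h'.vert_eq j]
    linarith
  · refine (pdist_le_via x z k l).trans ?_
    have e := h.off_le k
    rw [h']
    unfold via
    rw [h.vert_eq k]
    linarith
  · obtain ⟨g, s, t, t', rfl, rfl, e⟩ := h
    obtain ⟨g', s', u, u', e1, rfl, e'⟩ := h'
    cases e1
    rw [e, e']
    exact (pdist_le_same ⟨g, s, t, u', rfl, rfl, rfl⟩).trans (abs_sub_le _ _ _)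

noncomputable instance : PseudoMetricSpace (PrePoint R) where
  dist := pdist
  dist_self := pdist_self
  dist_comm := pdist_comm
  dist_triangle := pdist_triangle

end PrePoint

/-- The Cayley graph `Cay(G, S)` of `G = ⟨S | R⟩` with its path metric: names of points at
distance zero (those of the ends of edges and of the corresponding vertices) are identified. -/
abbrev Cay {S : Type*} (R : Set (Word S)) := SeparationQuotient (PrePoint R)

/-- The point at coordinate `t` (clamped to `[0, 1]`) on the oriented edge which starts at the
vertex `g` and is labelled by the letter `a`; the edge labelled `s⁻¹` starting at `g` is the edge
labelled `s` from `g s⁻¹` to `g`, traversed backwards. -/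
noncomputable def edgePoint {S : Type*} (R : Set (Word S)) (g : PGroup R) (a : S × Bool)
    (t : ℝ) : Cay R :=
  SeparationQuotient.mk <|
    if a.2 then PrePoint.edge g a.1 (Set.projIcc 0 1 zero_le_one t)
    else PrePoint.edge (g * (PresentedGroup.of a.1)⁻¹) a.1
      (unitInterval.symm (Set.projIcc 0 1 zero_le_one t))

/-- The edge path in `Cay(G, S)` which starts at the vertex `g` and is labelled by the word `w`,
parametrised with unit speed by `[0, |w|]`. -/
noncomputable def edgePath {S : Type*} (R : Set (Word S)) : PGroup R → Word S → ℝ → Cay R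
  | g, [], _ => SeparationQuotient.mk (PrePoint.vertex g)
  | g, a :: w, t =>
      if t ≤ 1 then edgePoint R g a t else edgePath R (g * evalWord R [a]) w (t - 1)

end MorseSC

/-!
Starting from a single vertex, one attaches all relators at all vertices of a folded labelled graph,
again and again. Two attached relators overlap in pieces only, and since a piece is shorter than a
sixth of a relator, the graph stays folded, and a relator that can be read for a third of its length
closes up. The free group acts on the union of all stages, relators act trivially, and every stage
carries a `1`-Lipschitz height function extending that of the previous one. Hence distances in
`⟨S | R⟩` are bounded from below by heights, and the vertices of a relator cycle are as far apart in
the Cayley graph as in the cycle, so that relator cycles are isometrically embedded.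

If the subword `w` of `r` is at least `|r| / N` long, consider an initial part of the path labelled
by `w` of length exactly `|r| / N`. The rest of the relator cycle, traversed backwards, is an
`N`-quasi-geodesic with the same ends, and its midpoint is at distance `(|r| - |r| / N) / 2` from
this part. If the path is `M`-Morse, this distance is at most `M N`.
-/

namespace MorseSC

universe u

/-! ### Words and folded labelled graphs -/

section Words

variable {S : Type u}

/-- The inverse of a letter. -/
def letterInv (a : S × Bool) : S × Bool := (a.1, !a.2)

@[simp] theorem letterInv_letterInv (a : S × Bool) : letterInv (letterInv a) = a := by
  simp [letterInv]

theorem letterInv_injective : Function.Injective (letterInv (S := S)) :=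
  Function.LeftInverse.injective letterInv_letterInv

theorem invRev_eq_reverse_map (w : Word S) : FreeGroup.invRev w = (w.map letterInv).reverse := rfl

theorem invRev_cons_eq (a : S × Bool) (w : Word S) :
    FreeGroup.invRev (a :: w) = FreeGroup.invRev w ++ [letterInv a] := by
  simp [invRev_eq_reverse_map]

theorem head?_invRev (w : Word S) : (FreeGroup.invRev w).head? = w.getLast?.map letterInv := by
  rw [invRev_eq_reverse_map, List.head?_reverse, List.getLast?_map]

theorem getLast?_invRev (w : Word S) : (FreeGroup.invRev w).getLast? = w.head?.map letterInv := by
  rw [invRev_eq_reverse_map, List.getLast?_reverse, List.head?_map]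

theorem getElem?_invRev {w : Word S} {i j : ℕ} (h : i + j + 1 = w.length) :
    (FreeGroup.invRev w)[i]? = w[j]?.map letterInv := by
  rw [invRev_eq_reverse_map, List.getElem?_reverse (by simp; omega), List.getElem?_map,
    List.length_map, show w.length - 1 - i = j by omega]

theorem getElem?_succ_ne_letterInv_of_isReduced {w : Word S} (hw : FreeGroup.IsReduced w) {i : ℕ}
    {a : S × Bool} (ha : w[i]? = some a) : w[i + 1]? ≠ some (letterInv a) := by
  intro hb
  obtain ⟨_, rfl⟩ := List.getElem?_eq_some_iff.1 ha
  obtain ⟨h, hb⟩ := List.getElem?_eq_some_iff.1 hb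
  have := List.isChain_iff_getElem.1 hw i h
  simp [hb, letterInv] at this

/-- A set of nonempty reduced words, closed under rotation and inversion and satisfying the metric
condition `C'(1/6)`. -/
structure SymmetrizedRelators (S : Type u) where
  words : Set (Word S)
  ne_nil : ∀ {r}, r ∈ words → r ≠ []
  rotate : ∀ {u v}, u ++ v ∈ words → v ++ u ∈ words
  inv : ∀ {r}, r ∈ words → FreeGroup.invRev r ∈ words
  reduced : ∀ {r}, r ∈ words → FreeGroup.IsReduced r
  piece : ∀ {r r' p}, r ∈ words → r' ∈ words → r ≠ r' → p <+: r → p <+: r' →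
    6 * p.length < r.length

end Words

/-- A graph with edges labelled by letters in which every edge can be traversed backwards, reading
the inverse letter, and which is folded in the sense of Stallings: an edge is determined by its
initial vertex and its label. -/
structure LabelledGraph (S : Type u) where
  V : Type u
  Edge : V → S × Bool → V → Prop
  symm : ∀ {x a y}, Edge x a y → Edge y (letterInv a) x
  det : ∀ {x a y z}, Edge x a y → Edge x a z → y = z

namespace LabelledGraph

variable {S : Type u}

/-- `Γ.Path x w y`: there is a path from `x` to `y` labelled `w`. -/
def Path (Γ : LabelledGraph S) : Γ.V → Word S → Γ.V → Prop
  | x, [], y => x = y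
  | x, a :: w, y => ∃ z, Γ.Edge x a z ∧ Path Γ z w y

variable {Γ : LabelledGraph S} {x y z : Γ.V} {u v w : Word S}

theorem path_append : Γ.Path x (v ++ w) y ↔ ∃ z, Γ.Path x v z ∧ Γ.Path z w y := by
  induction v generalizing x with
  | nil => simp [Path]
  | cons a v ih =>
    simp only [List.cons_append, Path, ih]
    exact ⟨fun ⟨z, h, z', h', h''⟩ => ⟨z', ⟨z, h, h'⟩, h''⟩,
      fun ⟨z', ⟨z, h, h'⟩, h''⟩ => ⟨z, h, z', h', h''⟩⟩

theorem path_singleton {a : S × Bool} : Γ.Path x [a] y ↔ Γ.Edge x a y := by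
  simp [Path]

theorem Path.symm (h : Γ.Path x w y) : Γ.Path y (FreeGroup.invRev w) x := by
  induction w generalizing x with
  | nil => exact Eq.symm h
  | cons a w ih =>
    obtain ⟨z, hxz, hzy⟩ := h
    rw [invRev_cons_eq]
    exact path_append.2 ⟨z, ih hzy, path_singleton.2 (Γ.symm hxz)⟩

theorem Path.target_unique (h : Γ.Path x w y) (h' : Γ.Path x w z) : y = z := by
  induction w generalizing x with
  | nil => exact Eq.trans (Eq.symm h) h'
  | cons a w ih =>
    obtain ⟨u, hu, huy⟩ := h
    obtain ⟨u', hu', huz⟩ := h'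
    obtain rfl := Γ.det hu hu'
    exact ih huy huz

theorem Path.source_unique (h : Γ.Path x w z) (h' : Γ.Path y w z) : x = y :=
  h.symm.target_unique h'.symm

theorem Path.closed_of_rotate (h : Γ.Path x u z) (h' : Γ.Path z (v ++ u) z) :
    Γ.Path x (u ++ v) x := by
  obtain ⟨x', hv, hu⟩ := path_append.1 h'
  obtain rfl := h.source_unique hu
  exact path_append.2 ⟨z, h, hv⟩

theorem Path.rotate_closed (h : Γ.Path x u z) (h' : Γ.Path x (u ++ v) x) :
    Γ.Path z (v ++ u) z := by
  obtain ⟨z', hu, hv⟩ := path_append.1 h'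
  obtain rfl := h.target_unique hu
  exact path_append.2 ⟨x, hv, h⟩

theorem exists_path_or_stuck (Γ : LabelledGraph S) (x : Γ.V) (w : Word S) :
    (∃ y, Γ.Path x w y) ∨ ∃ p a s z, w = p ++ a :: s ∧ Γ.Path x p z ∧ ∀ z', ¬ Γ.Edge z a z' := by
  induction w generalizing x with
  | nil => exact Or.inl ⟨x, rfl⟩
  | cons a w ih =>
    by_cases h : ∃ z, Γ.Edge x a z
    · obtain ⟨z, hz⟩ := h
      rcases ih z with ⟨y, hy⟩ | ⟨p, b, s, z', rfl, hp, hb⟩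
      · exact Or.inl ⟨y, z, hz, hy⟩
      · exact Or.inr ⟨a :: p, b, s, z', rfl, ⟨z, hz, hp⟩, hb⟩
    · exact Or.inr ⟨[], a, w, x, rfl, rfl, fun z hz => h ⟨z, hz⟩⟩

theorem Path.map {Δ : LabelledGraph S} (f : Γ.V → Δ.V)
    (hf : ∀ {x a y}, Γ.Edge x a y → Δ.Edge (f x) a (f y)) (h : Γ.Path x w y) :
    Δ.Path (f x) w (f y) := by
  induction w generalizing x with
  | nil => exact congrArg f h
  | cons a w ih =>
    obtain ⟨u, hu, huy⟩ := h
    exact ⟨_, hf hu, ih huy⟩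

theorem Path.le_add_length {f : Γ.V → ℤ} (hf : ∀ {x a y}, Γ.Edge x a y → f y ≤ f x + 1)
    (h : Γ.Path x w y) : f y ≤ f x + w.length := by
  induction w generalizing x with
  | nil => cases h; simp
  | cons a w ih =>
    obtain ⟨u, hu, huy⟩ := h
    push_cast [List.length_cons]
    linarith [hf hu, ih huy]

end LabelledGraph

/-! ### Stages and their exits -/

/-- A labelled graph with a `1`-Lipschitz function, in which every relator that can be read for at
least a third of its length is the label of a closed path. These are the successive stages of a
construction of the Cayley graph; the heights will bound distances from below. -/
structure Stage {S : Type u} (C : SymmetrizedRelators S) extends LabelledGraph S where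
  height : V → ℤ
  height_le : ∀ {x a y}, Edge x a y → height y ≤ height x + 1
  closed : ∀ {r p x y}, r ∈ C.words → p <+: r → r.length ≤ 3 * p.length →
    toLabelledGraph.Path x p y → toLabelledGraph.Path x r x

namespace Stage

variable {S : Type u} {C : SymmetrizedRelators S}

/-- A relator `outer ++ inner` which leaves the graph at `source`, reads `outer` outside of it,
comes back at `target` and returns to `source` inside the graph along `inner`. -/
@[ext] structure Exit (Γ : Stage C) where
  source : Γ.V
  target : Γ.V
  outer : Word S
  inner : Word S
  mem : outer ++ inner ∈ C.words
  ne_nil : outer ≠ []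
  path : Γ.Path target inner source
  out : ∀ a ∈ outer.head?, ∀ z, ¬ Γ.Edge source a z
  into : ∀ a ∈ outer.getLast?, ∀ z, ¬ Γ.Edge z a target

namespace Exit

variable {Γ : Stage C} {e e' : Γ.Exit} {i j : ℕ}

/-- The relator carried by an exit. -/
def rel (e : Γ.Exit) : Word S := e.outer ++ e.inner

theorem length_pos (e : Γ.Exit) : 0 < e.outer.length := List.length_pos_iff.2 e.ne_nil

theorem length_rel (e : Γ.Exit) : e.rel.length = e.outer.length + e.inner.length :=
  List.length_append

theorem isReduced_outer (e : Γ.Exit) : FreeGroup.IsReduced e.outer :=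
  List.IsChain.left_of_append (C.reduced e.mem)

/-- The same relator, read backwards. -/
def flip (e : Γ.Exit) : Γ.Exit where
  source := e.target
  target := e.source
  outer := FreeGroup.invRev e.outer
  inner := FreeGroup.invRev e.inner
  mem := C.rotate (by rw [← FreeGroup.invRev_append]; exact C.inv e.mem)
  ne_nil := by simpa [FreeGroup.invRev] using e.ne_nil
  path := e.path.symm
  out := by
    intro a ha z hz
    rw [head?_invRev, Option.mem_map] at ha
    obtain ⟨b, hb, rfl⟩ := ha
    exact e.into b hb z (letterInv_letterInv b ▸ Γ.symm hz)
  into := by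
    intro a ha z hz
    rw [getLast?_invRev, Option.mem_map] at ha
    obtain ⟨b, hb, rfl⟩ := ha
    exact e.out b hb z (letterInv_letterInv b ▸ Γ.symm hz)

@[simp] theorem flip_flip (e : Γ.Exit) : e.flip.flip = e := by
  ext1 <;> simp [flip]

@[simp] theorem flip_source (e : Γ.Exit) : e.flip.source = e.target := rfl

@[simp] theorem flip_target (e : Γ.Exit) : e.flip.target = e.source := rfl

@[simp] theorem length_outer_flip (e : Γ.Exit) : e.flip.outer.length = e.outer.length := by
  simp [flip]

@[simp] theorem length_rel_flip (e : Γ.Exit) : e.flip.rel.length = e.rel.length := by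
  simp [flip, rel]

theorem getElem?_outer_flip (h : i + j + 1 = e.outer.length) :
    e.flip.outer[i]? = e.outer[j]?.map letterInv :=
  getElem?_invRev h

/-- Otherwise the relator, read from the start of `inner`, would close up inside the graph. -/
theorem three_mul_length_inner_lt (e : Γ.Exit) : 3 * e.inner.length < e.rel.length := by
  by_contra! h
  have hclosed := Γ.closed (C.rotate e.mem) (List.prefix_append _ _)
    (by simpa [rel, add_comm] using h) e.path
  obtain ⟨z, hinner, houter⟩ := LabelledGraph.path_append.1 hclosed
  obtain rfl := hinner.target_unique e.path
  obtain ⟨a, t, ht⟩ := List.exists_cons_of_ne_nil e.ne_nil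
  rw [ht] at houter
  obtain ⟨w, hw, -⟩ := houter
  exact e.out a (by simp [ht]) w hw

theorem two_mul_length_rel_lt (e : Γ.Exit) : 2 * e.rel.length < 3 * e.outer.length := by
  have := e.three_mul_length_inner_lt
  have := e.length_rel
  omega

theorem length_inner_le_of_rel_eq (hs : e.source = e'.source) (hr : e.rel = e'.rel) :
    e'.inner.length ≤ e.inner.length := by
  by_contra! h
  obtain ⟨u, hu⟩ : e.inner <:+ e'.inner := List.suffix_of_suffix_length_le (l₃ := e.rel)
    (List.suffix_append _ _) (hr ▸ List.suffix_append _ _) h.le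
  have hne : u ≠ [] := by
    rintro rfl
    simp [← hu] at h
  have houter : e.outer = e'.outer ++ u :=
    List.append_cancel_right (bs := e.inner) (by rw [List.append_assoc, hu]; exact hr)
  obtain ⟨z, hz, hinner⟩ := LabelledGraph.path_append.1 (hu ▸ e'.path)
  obtain rfl := hinner.source_unique (hs ▸ e.path)
  rw [← List.dropLast_concat_getLast hne] at hz houter
  obtain ⟨z', -, hz'⟩ := LabelledGraph.path_append.1 hz
  exact e.into _ (by simp [houter, ← List.append_assoc]) z' (LabelledGraph.path_singleton.1 hz')

theorem eq_of_rel_eq (hs : e.source = e'.source) (hr : e.rel = e'.rel) : e = e' := by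
  have hl := le_antisymm (length_inner_le_of_rel_eq hs.symm hr.symm)
    (length_inner_le_of_rel_eq hs hr)
  obtain ⟨houter, hinner⟩ := List.append_inj' hr hl
  exact Exit.ext hs (e.path.source_unique (hinner ▸ hs ▸ e'.path)) houter hinner

/-- Here `inner` is the longest terminal part of the relator that can be read backwards from `z`. -/
theorem exists_rel_eq {z : Γ.V} {a : S × Bool} {s : Word S} (hr : a :: s ∈ C.words)
    (hz : ∀ z', ¬ Γ.Edge z a z') : ∃ e : Γ.Exit, e.source = z ∧ e.rel = a :: s := by
  have hr' := C.inv hr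
  rcases Γ.exists_path_or_stuck z (FreeGroup.invRev (a :: s)) with
    ⟨y, hy⟩ | ⟨p, b, q, y, hpq, hp, hb⟩
  · have hclosed := (Γ.closed hr' (List.prefix_refl _) (by omega) hy).symm
    rw [FreeGroup.invRev_invRev] at hclosed
    obtain ⟨w, hw, -⟩ := hclosed
    exact (hz w hw).elim
  · have hsplit : FreeGroup.invRev (b :: q) ++ FreeGroup.invRev p = a :: s := by
      rw [← FreeGroup.invRev_append, ← hpq, FreeGroup.invRev_invRev]
    have hhead : ∀ c ∈ (FreeGroup.invRev (b :: q)).head?, c = a := by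
      intro c hc
      have := congrArg List.head? hsplit
      rw [List.head?_append, hc] at this
      simpa using this
    refine ⟨⟨z, y, FreeGroup.invRev (b :: q), FreeGroup.invRev p, hsplit ▸ hr,
      by simp [FreeGroup.invRev], hp.symm, fun c hc => hhead c hc ▸ hz, ?_⟩, rfl, hsplit⟩
    intro c hc z' hz'
    rw [getLast?_invRev] at hc
    obtain rfl : letterInv b = c := by simpa using hc
    exact hb z' (letterInv_letterInv b ▸ Γ.symm hz')

/-- The exits `e` and `e'` agree on their first `i` edges. -/
def Agree (i : ℕ) (e e' : Γ.Exit) : Prop :=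
  e.source = e'.source ∧ e.outer.take i = e'.outer.take i

theorem Agree.symm (h : Agree i e e') : Agree i e' e := ⟨h.1.symm, h.2.symm⟩

theorem Agree.mono (h : Agree i e e') (hj : j ≤ i) : Agree j e e' :=
  ⟨h.1, by simpa [List.take_take, hj] using congrArg (List.take j) h.2⟩

theorem Agree.getElem? (h : Agree i e e') (hj : j < i) : e.outer[j]? = e'.outer[j]? := by
  simpa [List.getElem?_take, hj] using congrArg (·[j]?) h.2

theorem Agree.succ {a : S × Bool} (h : Agree i e e') (ha : a ∈ e.outer[i]?)
    (ha' : a ∈ e'.outer[i]?) : Agree (i + 1) e e' :=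
  ⟨h.1, by rw [List.take_add_one, List.take_add_one, h.2, ha, ha']⟩

theorem Agree.eq_or_short (h : Agree i e e') (hi : i ≤ e.outer.length) :
    e = e' ∨ (6 * i < e.rel.length ∧ 6 * i < e'.rel.length) := by
  refine or_iff_not_imp_left.2 fun hne => ?_
  have hr : e.rel ≠ e'.rel := fun hr => hne (eq_of_rel_eq h.1 hr)
  have hp : e.outer.take i <+: e.rel := (List.take_prefix _ _).trans (List.prefix_append _ _)
  have hp' : e.outer.take i <+: e'.rel :=
    h.2 ▸ (List.take_prefix _ _).trans (List.prefix_append _ _)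
  have hl := List.length_take_of_le hi
  exact ⟨hl ▸ C.piece e.mem e'.mem hr hp hp', hl ▸ C.piece e'.mem e.mem hr.symm hp' hp⟩

end Exit

end Stage

/-- By `h`, a chain `r p q`, `r (ι q) s`, which changes direction at `q`, is trivial. -/
theorem equivalence_of_involutive {X : Type*} {r : X → X → Prop} (hr : Equivalence r) {ι : X → X}
    (hι : Function.Involutive ι) (h : ∀ {p q s}, r p q → r (ι p) s → p = q ∨ s = ι p) :
    Equivalence fun p q => r p q ∨ r (ι p) q ∨ r p (ι q) ∨ r (ι p) (ι q) := by
  have trans_left : ∀ {p q s}, r p q → r q s ∨ r (ι q) s ∨ r q (ι s) ∨ r (ι q) (ι s) →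
      r p s ∨ r (ι p) s ∨ r p (ι s) ∨ r (ι p) (ι s) := by
    rintro p q s hpq (hqs | hqs | hqs | hqs)
    · exact Or.inl (hr.trans hpq hqs)
    · rcases h (hr.symm hpq) hqs with rfl | rfl
      · exact Or.inr (Or.inl hqs)
      · exact Or.inr (Or.inr (Or.inl ((hι q).symm ▸ hpq)))
    · exact Or.inr (Or.inr (Or.inl (hr.trans hpq hqs)))
    · rcases h (hr.symm hpq) hqs with rfl | hs
      · exact Or.inr (Or.inr (Or.inr hqs))
      · exact Or.inl (hι.injective hs ▸ hpq)
  refine ⟨fun p => Or.inl (hr.refl p), ?_, fun {p q s} hpq hqs => ?_⟩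
  · rintro p q (hpq | hpq | hpq | hpq)
    · exact Or.inl (hr.symm hpq)
    · exact Or.inr (Or.inr (Or.inl (hr.symm hpq)))
    · exact Or.inr (Or.inl (hr.symm hpq))
    · exact Or.inr (Or.inr (Or.inr (hr.symm hpq)))
  · have hqs' : r (ι q) s ∨ r (ι (ι q)) s ∨ r (ι q) (ι s) ∨ r (ι (ι q)) (ι s) := by
      rw [hι]; tauto
    have flip : r (ι p) s ∨ r (ι (ι p)) s ∨ r (ι p) (ι s) ∨ r (ι (ι p)) (ι s) →
        r p s ∨ r (ι p) s ∨ r p (ι s) ∨ r (ι p) (ι s) := by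
      rw [hι]; tauto
    rcases hpq with hpq | hpq | hpq | hpq
    · exact trans_left hpq hqs
    · exact flip (trans_left hpq hqs)
    · exact trans_left hpq hqs'
    · exact flip (trans_left hpq hqs')

namespace Stage

variable {S : Type u} {C : SymmetrizedRelators S} {Γ : Stage C}

variable (Γ) in
/-- A position strictly inside the outer part of an exit. -/
@[ext] structure Spot where
  exit : Γ.Exit
  idx : ℕ
  idx_pos : 0 < idx
  idx_lt : idx < exit.outer.length

namespace Spot

variable {p q s : Γ.Spot}

/-- The same position on the exit read backwards. -/
@[simps] def flip (p : Γ.Spot) : Γ.Spot where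
  exit := p.exit.flip
  idx := p.exit.outer.length - p.idx
  idx_pos := Nat.sub_pos_of_lt p.idx_lt
  idx_lt := by
    have := p.idx_pos
    have := p.idx_lt
    rw [Exit.length_outer_flip]
    omega

theorem flip_involutive : Function.Involutive (flip (Γ := Γ)) := by
  intro p
  ext1
  · simp
  · simp [Nat.sub_sub_self p.idx_lt.le]

/-- Two exits coincide from their common source up to the given spots. -/
def Share (p q : Γ.Spot) : Prop := p.idx = q.idx ∧ Exit.Agree p.idx p.exit q.exit

theorem share_equivalence : Equivalence (Share (Γ := Γ)) :=
  ⟨fun _ => ⟨rfl, rfl, rfl⟩, fun h => ⟨h.1.symm, h.1 ▸ h.2.symm⟩,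
    fun h h' => ⟨h.1.trans h'.1, h.2.1.trans (h.1 ▸ h'.2).1, h.2.2.trans (h.1 ▸ h'.2).2⟩⟩

theorem Share.eq_or_short (h : Share p q) :
    p = q ∨ (6 * p.idx < p.exit.rel.length ∧ 6 * q.idx < q.exit.rel.length) :=
  (h.2.eq_or_short p.idx_lt.le).imp (fun he => Spot.ext he h.1) fun hs => ⟨hs.1, h.1 ▸ hs.2⟩

/-- Two pieces are too short to cover the outer part of an exit from both ends. -/
theorem eq_or_eq_flip_of_share (hq : Share p q) (hs : Share p.flip s) : p = q ∨ s = p.flip := by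
  refine hq.eq_or_short.imp_right fun hshort => ?_
  refine hs.eq_or_short.elim Eq.symm fun hshort' => ?_
  have := p.exit.two_mul_length_rel_lt
  have := p.idx_lt
  simp only [flip_idx, flip_exit, Exit.length_rel_flip] at hshort'
  omega

/-- Two exits pass through the same new vertex: up to reading each of them backwards, they
coincide up to there. -/
def Meet (p q : Γ.Spot) : Prop :=
  Share p q ∨ Share p.flip q ∨ Share p q.flip ∨ Share p.flip q.flip

variable (Γ) in
/-- The identification of spots which yields the new vertices. -/
def setoid : Setoid Γ.Spot where
  r := Meet
  iseqv := equivalence_of_involutive share_equivalence flip_involutive eq_or_eq_flip_of_share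

theorem Meet.apply_eq {α : Type*} {f : Γ.Spot → α} (hflip : ∀ p, f p.flip = f p)
    (hshare : ∀ {p q}, Share p q → f p = f q) (h : Meet p q) : f p = f q := by
  rcases h with h | h | h | h <;> simpa only [hflip] using hshare h

theorem Share.getElem?_idx_eq (h : Share p.flip q) {a : S × Bool} (ha : a ∈ p.exit.outer[p.idx]?) :
    q.exit.outer[q.idx - 1]? = some (letterInv a) := by
  have hp := p.idx_lt
  have hq := q.idx_pos
  have hidx : p.exit.outer.length - p.idx = q.idx := h.1
  rw [← h.2.getElem? (by simp only [flip_idx]; omega), flip_exit,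
    Exit.getElem?_outer_flip (j := p.idx) (by omega), ha, Option.map_some]

theorem Share.getElem?_eq_of_flip_flip (h : Share p.flip q.flip) :
    p.exit.outer[p.idx]? = q.exit.outer[q.idx]? := by
  have hp := p.idx_lt
  have hq := q.idx_lt
  have hidx : p.exit.outer.length - p.idx = q.exit.outer.length - q.idx := h.1
  obtain ⟨m, hm⟩ := Nat.exists_eq_add_of_lt hp
  have hlast := h.2.getElem? (j := m) (by simp only [flip_idx]; omega)
  rw [flip_exit, flip_exit, Exit.getElem?_outer_flip (j := p.idx) (by omega),
    Exit.getElem?_outer_flip (j := q.idx) (by omega)] at hlast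
  exact Option.map_injective letterInv_injective hlast

/-- A reduced word does not backtrack, so two exits running through a new vertex in opposite
directions do not continue with the same letter. -/
theorem Share.not_mem_getElem? (h : Share p.flip q) {a : S × Bool}
    (ha : a ∈ p.exit.outer[p.idx]?) : a ∉ q.exit.outer[q.idx]? := by
  have := getElem?_succ_ne_letterInv_of_isReduced q.exit.isReduced_outer (h.getElem?_idx_eq ha)
  rwa [Nat.sub_add_cancel q.idx_pos, letterInv_letterInv] at this

end Spot

/-! ### The graph of the next stage -/

variable (Γ) in
/-- The vertices of the next stage. -/
abbrev NextV : Type u := Γ.V ⊕ Quotient (Spot.setoid Γ)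

/-- The vertex of the next stage at a spot. -/
def Spot.vertex (p : Γ.Spot) : Γ.NextV := Sum.inr (Quotient.mk _ p)

theorem Spot.vertex_eq_iff {p q : Γ.Spot} : p.vertex = q.vertex ↔ p.Meet q :=
  Sum.inr_injective.eq_iff.trans Quotient.eq

namespace Exit

variable {e e' : Γ.Exit} {i j : ℕ} {a : S × Bool}

/-- The vertex of the next stage at position `i` on the outer part of an exit; positions beyond
the end all give the target. -/
def pos (e : Γ.Exit) (i : ℕ) : Γ.NextV :=
  if h0 : 0 < i then
    if h : i < e.outer.length then Spot.vertex ⟨e, i, h0, h⟩ else Sum.inl e.target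
  else Sum.inl e.source

theorem pos_zero (e : Γ.Exit) : e.pos 0 = Sum.inl e.source := rfl

theorem pos_length (e : Γ.Exit) : e.pos e.outer.length = Sum.inl e.target := by
  simp [pos, e.length_pos]

theorem pos_idx (p : Γ.Spot) : p.exit.pos p.idx = p.vertex := by
  rw [pos, dif_pos p.idx_pos, dif_pos p.idx_lt]

theorem pos_of_lt (h0 : 0 < i) (hi : i < e.outer.length) :
    e.pos i = Spot.vertex ⟨e, i, h0, hi⟩ :=
  pos_idx ⟨e, i, h0, hi⟩

theorem interior_of_pos_ne_inl (hi : i ≤ e.outer.length) (h : ∀ x, e.pos i ≠ Sum.inl x) :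
    0 < i ∧ i < e.outer.length := by
  refine ⟨Nat.pos_of_ne_zero ?_, hi.lt_of_ne ?_⟩
  · rintro rfl
    exact h _ e.pos_zero
  · rintro rfl
    exact h _ e.pos_length

theorem pos_flip (e : Γ.Exit) (hij : i + j = e.outer.length) : e.flip.pos i = e.pos j := by
  rcases Nat.eq_zero_or_pos j with rfl | hj
  · have := e.flip.pos_length
    rwa [length_outer_flip, ← hij] at this
  rcases Nat.eq_zero_or_pos i with rfl | hi
  · rw [← zero_add j, hij, pos_length, pos_zero, flip_source]
  · obtain rfl : i = e.outer.length - j := by omega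
    let p : Γ.Spot := ⟨e, j, hj, by omega⟩
    rw [pos_of_lt hj p.idx_lt]
    refine (pos_idx p.flip).trans (Spot.vertex_eq_iff.2 (Or.inr (Or.inr (Or.inl ?_))))
    exact Spot.share_equivalence.refl _

theorem Agree.pos_eq (h : Agree i e e') (hi : i < e.outer.length) (hi' : i < e'.outer.length) :
    e.pos i = e'.pos i := by
  rcases Nat.eq_zero_or_pos i with rfl | h0
  · rw [pos_zero, pos_zero, h.1]
  · rw [pos_of_lt h0 hi, pos_of_lt h0 hi', Spot.vertex_eq_iff]
    exact Or.inl ⟨rfl, h⟩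

theorem Agree.pos_succ_eq (h : Agree i e e') (ha : a ∈ e.outer[i]?) (ha' : a ∈ e'.outer[i]?) :
    e.pos (i + 1) = e'.pos (i + 1) := by
  have hsucc := h.succ ha ha'
  rcases hsucc.eq_or_short (List.getElem?_eq_some_iff.1 ha).1 with rfl | ⟨hshort, hshort'⟩
  · rfl
  · have := e.two_mul_length_rel_lt
    have := e'.two_mul_length_rel_lt
    exact hsucc.pos_eq (by omega) (by omega)

end Exit

theorem Spot.Meet.pos_succ_eq {p q : Γ.Spot} {a : S × Bool} (h : p.Meet q)
    (ha : a ∈ p.exit.outer[p.idx]?) (ha' : a ∈ q.exit.outer[q.idx]?) :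
    p.exit.pos (p.idx + 1) = q.exit.pos (q.idx + 1) := by
  rcases h with h | h | h | h
  · rw [← h.1] at ha' ⊢
    exact h.2.pos_succ_eq ha ha'
  · exact (h.not_mem_getElem? ha ha').elim
  · exact ((share_equivalence.symm h).not_mem_getElem? ha' ha).elim
  · have hp := p.idx_lt
    have hq := q.idx_lt
    have hidx : p.exit.outer.length - p.idx = q.exit.outer.length - q.idx := h.1
    rw [← p.exit.pos_flip (i := p.exit.outer.length - (p.idx + 1)) (by omega),
      ← q.exit.pos_flip (i := p.exit.outer.length - (p.idx + 1)) (by omega)]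
    have := p.idx_pos
    have := q.idx_pos
    exact (h.2.mono (by simp only [flip_idx]; omega)).pos_eq
      (by rw [flip_exit, Exit.length_outer_flip]; omega)
      (by rw [flip_exit, Exit.length_outer_flip]; omega)

/-- The edges of the next stage: the old ones, and those on the outer parts of exits. -/
inductive NextEdge : Γ.NextV → S × Bool → Γ.NextV → Prop
  | old {x a y} : Γ.Edge x a y → NextEdge (Sum.inl x) a (Sum.inl y)
  | new (e : Γ.Exit) (i : ℕ) {a} : a ∈ e.outer[i]? → NextEdge (e.pos i) a (e.pos (i + 1))

namespace NextEdge

variable {p q q' : Γ.NextV} {a : S × Bool}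

theorem symm (h : NextEdge p a q) : NextEdge q (letterInv a) p := by
  rcases h with h | ⟨e, i, ha⟩
  · exact old (Γ.symm h)
  · obtain ⟨hi, -⟩ := List.getElem?_eq_some_iff.1 ha
    obtain ⟨j, hj⟩ := Nat.exists_eq_add_of_le hi
    rw [← e.pos_flip (i := j) (by omega), ← e.pos_flip (i := j + 1) (by omega)]
    refine new e.flip j ?_
    rw [Exit.getElem?_outer_flip (j := i) (by omega), ha]
    rfl

theorem not_edge_of_pos_eq_inl {e : Γ.Exit} {i : ℕ} {x : Γ.V} (ha : a ∈ e.outer[i]?)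
    (hx : e.pos i = Sum.inl x) (y : Γ.V) : ¬ Γ.Edge x a y := by
  obtain ⟨hi, -⟩ := List.getElem?_eq_some_iff.1 ha
  rcases Nat.eq_zero_or_pos i with rfl | h0
  · obtain rfl := Sum.inl_injective hx
    exact e.out a (List.head?_eq_getElem? ▸ ha) y
  · rw [Exit.pos_of_lt h0 hi] at hx
    exact absurd hx Sum.inr_ne_inl

theorem pos_succ_eq_of_pos_eq {e e' : Γ.Exit} {i j : ℕ} (h : e.pos i = e'.pos j)
    (ha : a ∈ e.outer[i]?) (ha' : a ∈ e'.outer[j]?) : e.pos (i + 1) = e'.pos (j + 1) := by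
  obtain ⟨hi, -⟩ := List.getElem?_eq_some_iff.1 ha
  obtain ⟨hj, -⟩ := List.getElem?_eq_some_iff.1 ha'
  rcases Nat.eq_zero_or_pos i with rfl | hi0 <;> rcases Nat.eq_zero_or_pos j with rfl | hj0
  · exact Exit.Agree.pos_succ_eq ⟨Sum.inl_injective h, by simp⟩ ha ha'
  · rw [Exit.pos_of_lt hj0 hj, Exit.pos_zero] at h
    exact absurd h Sum.inl_ne_inr
  · rw [Exit.pos_of_lt hi0 hi, Exit.pos_zero] at h
    exact absurd h Sum.inr_ne_inl
  · rw [Exit.pos_of_lt hi0 hi, Exit.pos_of_lt hj0 hj, Spot.vertex_eq_iff] at h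
    exact h.pos_succ_eq ha ha'

theorem det (h : NextEdge p a q) (h' : NextEdge p a q') : q = q' := by
  generalize hp : p = p' at h'
  rcases h with h | ⟨e, i, ha⟩ <;> rcases h' with h' | ⟨e', j, ha'⟩
  · obtain rfl := Sum.inl_injective hp
    rw [Γ.det h h']
  · exact (not_edge_of_pos_eq_inl ha' hp.symm _ h).elim
  · exact (not_edge_of_pos_eq_inl ha hp _ h').elim
  · exact pos_succ_eq_of_pos_eq hp ha ha'

end NextEdge

variable (Γ) in
/-- The graph underlying the next stage: all relators are attached at all vertices. -/
def nextGraph : LabelledGraph S where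
  V := Γ.NextV
  Edge := NextEdge
  symm := NextEdge.symm
  det := NextEdge.det

/-- The height at position `i` of an exit: one may go there from either end. -/
def Exit.height (e : Γ.Exit) (i : ℕ) : ℤ :=
  min (Γ.height e.source + i) (Γ.height e.target + e.outer.length - i)

namespace Exit

variable {e e' : Γ.Exit} {i : ℕ}

theorem height_flip (e : Γ.Exit) (hi : i ≤ e.outer.length) :
    e.flip.height (e.outer.length - i) = e.height i := by
  unfold Exit.height
  rw [min_comm, length_outer_flip, flip_source, flip_target]
  push_cast [hi]
  congr 1 <;> ring

theorem height_of_short (e : Γ.Exit) (hi : 6 * i ≤ e.rel.length) :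
    e.height i = Γ.height e.source + i := by
  have := e.path.le_add_length Γ.height_le
  have := e.three_mul_length_inner_lt
  have := e.length_rel
  apply min_eq_left
  omega

end Exit

/-- The height at a spot. -/
def Spot.height (p : Γ.Spot) : ℤ := p.exit.height p.idx

theorem Spot.Meet.height_eq {p q : Γ.Spot} (h : p.Meet q) : p.height = q.height := by
  refine h.apply_eq (fun p => p.exit.height_flip p.idx_lt.le) fun {p q} hpq => ?_
  rcases hpq.eq_or_short with rfl | ⟨hp, hq⟩
  · rfl
  · rw [Spot.height, Spot.height, Exit.height_of_short _ hp.le, Exit.height_of_short _ hq.le,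
      hpq.2.1, hpq.1]

/-- The height function of the next stage. -/
def nextHeight : Γ.NextV → ℤ :=
  Sum.elim Γ.height (Quotient.lift Spot.height fun _ _ h => h.height_eq)

theorem nextHeight_pos (e : Γ.Exit) {i : ℕ} (hi : i ≤ e.outer.length) :
    nextHeight (e.pos i) = e.height i := by
  rcases Nat.eq_zero_or_pos i with rfl | h0
  · rw [e.height_of_short (by omega), Nat.cast_zero, add_zero]
    rfl
  rcases hi.eq_or_lt with rfl | h1
  · rw [e.pos_length, ← e.height_flip le_rfl, Nat.sub_self, e.flip.height_of_short (by omega),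
      Nat.cast_zero, add_zero]
    rfl
  · rw [Exit.pos_of_lt h0 h1]
    rfl

theorem nextHeight_le {p q : Γ.NextV} {a : S × Bool} (h : NextEdge p a q) :
    nextHeight q ≤ nextHeight p + 1 := by
  rcases h with h | ⟨e, i, ha⟩
  · exact Γ.height_le h
  · obtain ⟨hi, -⟩ := List.getElem?_eq_some_iff.1 ha
    rw [nextHeight_pos e hi.le, nextHeight_pos e hi]
    unfold Exit.height
    push_cast
    omega

/-! ### Relators in the next stage -/

namespace Exit

variable {e : Γ.Exit} {i k : ℕ}

/-- The word of length `k` read along the outer part of an exit from position `i` on. -/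
def segment (e : Γ.Exit) (i k : ℕ) : Word S := (e.outer.drop i).take k

theorem length_segment (h : i + k ≤ e.outer.length) : (e.segment i k).length = k := by
  rw [segment, List.length_take, List.length_drop]
  omega

theorem segment_zero_left : e.segment 0 k = e.outer.take k := by
  rw [segment, List.drop_zero]

theorem segment_zero_right : e.segment i 0 = [] := List.take_zero

theorem segment_succ {a : S × Bool} (ha : a ∈ e.outer[i + k]?) :
    e.segment i (k + 1) = e.segment i k ++ [a] := by
  rw [segment, List.take_add_one, List.getElem?_drop, ha]
  rfl

theorem Agree.segment_eq {e' : Γ.Exit} (h : Agree (i + k) e e') :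
    e.segment i k = e'.segment i k := by
  simpa [segment, List.drop_take] using congrArg (List.drop i) h.2

theorem path_segment (e : Γ.Exit) (h : i + k ≤ e.outer.length) :
    Γ.nextGraph.Path (e.pos i) (e.segment i k) (e.pos (i + k)) := by
  induction k with
  | zero => exact rfl
  | succ k ih =>
    have hk : e.outer[i + k] ∈ e.outer[i + k]? := List.getElem?_eq_getElem h
    rw [segment_succ hk]
    exact LabelledGraph.path_append.2
      ⟨_, ih (by omega), LabelledGraph.path_singleton.2 (NextEdge.new e (i + k) hk)⟩

end Exit

theorem path_inl {x y : Γ.V} {w : Word S} (h : Γ.Path x w y) :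
    Γ.nextGraph.Path (Sum.inl x) w (Sum.inl y) :=
  h.map (Δ := Γ.nextGraph) Sum.inl NextEdge.old

theorem Exit.path_rel (e : Γ.Exit) :
    Γ.nextGraph.Path (Sum.inl e.source) e.rel (Sum.inl e.source) := by
  have h := e.path_segment (i := 0) (zero_add _).le
  rw [segment_zero_left, List.take_length, pos_zero, zero_add, pos_length] at h
  exact LabelledGraph.path_append.2 ⟨_, h, path_inl e.path⟩

theorem Exit.path_rel_pos (e : Γ.Exit) {i : ℕ} (hi : i ≤ e.outer.length) :
    Γ.nextGraph.Path (e.pos i) (e.outer.drop i ++ e.inner ++ e.outer.take i) (e.pos i) := by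
  have h := e.path_segment (i := 0) ((zero_add i).trans_le hi)
  rw [segment_zero_left, pos_zero, zero_add] at h
  refine h.rotate_closed ?_
  rw [← List.append_assoc, List.take_append_drop]
  exact e.path_rel

theorem path_relator_inl {r : Word S} (hr : r ∈ C.words) (x : Γ.V) :
    Γ.nextGraph.Path (Sum.inl x) r (Sum.inl x) := by
  rcases Γ.exists_path_or_stuck x r with ⟨y, hy⟩ | ⟨p, a, s, z, rfl, hp, ha⟩
  · exact path_inl (Γ.closed hr (List.prefix_refl _) (by omega) hy)
  · obtain ⟨e, rfl, he⟩ := Exit.exists_rel_eq (C.rotate hr) ha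
    have hrel := e.path_rel
    rw [he] at hrel
    exact (path_inl hp).closed_of_rotate hrel

/-- The common part is too long to be a piece, so the relator coincides, up to rotation, with that
of the exit. -/
theorem path_relator_of_long_segment {r w₁ w₂ : Word S} {e : Γ.Exit} {i k : ℕ} {q : Γ.NextV}
    (hr : r ∈ C.words) (hik : i + k ≤ e.outer.length) (hrw : w₁ ++ e.segment i k ++ w₂ = r)
    (hk : r.length ≤ 6 * k ∨ e.rel.length ≤ 6 * k) (hq : Γ.nextGraph.Path q w₁ (e.pos i)) :
    Γ.nextGraph.Path q r q := by
  have hmem : e.segment i k ++ w₂ ++ w₁ ∈ C.words :=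
    C.rotate (by rwa [← List.append_assoc, hrw])
  have hmem' : e.outer.drop i ++ e.inner ++ e.outer.take i ∈ C.words :=
    C.rotate (by rw [← List.append_assoc, List.take_append_drop]; exact e.mem)
  have heq : e.segment i k ++ w₂ ++ w₁ = e.outer.drop i ++ e.inner ++ e.outer.take i := by
    by_contra hne
    have hp : e.segment i k <+: e.segment i k ++ w₂ ++ w₁ :=
      List.append_assoc _ _ _ ▸ List.prefix_append _ _
    have hp' : e.segment i k <+: e.outer.drop i ++ e.inner ++ e.outer.take i :=
      List.append_assoc _ _ _ ▸ (List.take_prefix _ _).trans (List.prefix_append _ _)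
    have hshort := C.piece hmem hmem' hne hp hp'
    have hshort' := C.piece hmem' hmem (Ne.symm hne) hp' hp
    have := e.length_rel
    simp only [← hrw, List.length_append, List.length_drop, List.length_take,
      Exit.length_segment hik] at hk hshort hshort'
    omega
  rw [← hrw, List.append_assoc]
  exact hq.closed_of_rotate (heq ▸ e.path_rel_pos (by omega))

/-- The path from `q` labelled `init ++ e.segment i k` runs through new vertices along `e`, except
possibly for a short initial part along another exit, from which it turns to `e` near its source;
`r` is the relator being read. -/
structure IsRun (r : Word S) (q : Γ.NextV) (init : Word S) (e : Γ.Exit) (i k : ℕ) : Prop where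
  path : Γ.nextGraph.Path q init (e.pos i)
  start_pos : 0 < i
  len_pos : 0 < k
  lt : i + k < e.outer.length
  init_short : 6 * init.length < r.length
  init_nil_or : init = [] ∨ 6 * i < e.rel.length

namespace IsRun

variable {r init : Word S} {q : Γ.NextV} {e e' : Γ.Exit} {i k : ℕ} {a : S × Bool}

theorem end_pos (h : IsRun r q init e i k) : 0 < i + k := Nat.add_pos_left h.start_pos k

theorem path_append (h : IsRun r q init e i k) :
    Γ.nextGraph.Path q (init ++ e.segment i k) (e.pos (i + k)) :=
  LabelledGraph.path_append.2 ⟨_, h.path, e.path_segment h.lt.le⟩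

theorem exists_last (h : IsRun r q init e i k) :
    ∃ b ∈ (init ++ e.segment i k).getLast?, b ∈ e.outer[i + k - 1]? := by
  have hlt := h.lt
  obtain ⟨k, rfl⟩ := Nat.exists_eq_add_of_le' h.len_pos
  have hb : e.outer[i + k] ∈ e.outer[i + k]? := List.getElem?_eq_getElem (by omega)
  exact ⟨_, by rw [Exit.segment_succ hb, ← List.append_assoc, List.getLast?_concat]; rfl, hb⟩

theorem concat (h : IsRun r q init e i k) (hlt : i + (k + 1) < e.outer.length) :
    IsRun r q init e i (k + 1) :=
  { h with len_pos := k.succ_pos, lt := hlt }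

theorem of_agree (h : IsRun r q init e i k) (he : Exit.Agree (i + k) e e')
    (hlt : i + k < e'.outer.length) : IsRun r q init e' i k where
  path := (he.mono (Nat.le_add_right i k)).pos_eq ((Nat.le_add_right i k).trans_lt h.lt)
    ((Nat.le_add_right i k).trans_lt hlt) ▸ h.path
  start_pos := h.start_pos
  len_pos := h.len_pos
  lt := hlt
  init_short := h.init_short
  init_nil_or := by
    rcases he.eq_or_short h.lt.le with rfl | ⟨-, hshort⟩
    · exact h.init_nil_or
    · exact Or.inr (by omega)

theorem short_of_not_closed (h : IsRun r q init e i k) (hr : r ∈ C.words)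
    (hq : ¬ Γ.nextGraph.Path q r q) (hp : init ++ e.segment i k <+: r) :
    6 * k < r.length ∧ 6 * k < e.rel.length := by
  obtain ⟨w, hw⟩ := hp
  by_contra hlong
  exact hq (path_relator_of_long_segment hr h.lt.le hw (by omega) h.path)

/-- A second turn is impossible: `e`, entered near its source and left near its target, would have
been followed for more than a sixth of its relator. -/
theorem turn (h : IsRun r q init e i k) (hr : r ∈ C.words) (hq : ¬ Γ.nextGraph.Path q r q)
    (hp : init ++ e.segment i k <+: r) {Q : Γ.Spot} (hQ : Q.vertex = e.pos (i + k))
    (hlt : Q.idx + 1 < Q.exit.outer.length)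
    (hend : 6 * (e.outer.length - (i + k)) < e.rel.length)
    (hstart : 6 * Q.idx < Q.exit.rel.length) :
    IsRun r q (init ++ e.segment i k) Q.exit Q.idx 1 where
  path := by
    rw [Exit.pos_idx, hQ]
    exact h.path_append
  start_pos := Q.idx_pos
  len_pos := one_pos
  lt := hlt
  init_short := by
    have hshort := h.short_of_not_closed hr hq hp
    rcases h.init_nil_or with rfl | hi
    · rw [List.nil_append, Exit.length_segment h.lt.le]
      exact hshort.1
    · have := e.two_mul_length_rel_lt
      omega
  init_nil_or := Or.inr hstart

theorem exists_concat (h : IsRun r q init e i k) (hr : r ∈ C.words)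
    (hq : ¬ Γ.nextGraph.Path q r q) (hp : init ++ e.segment i k ++ [a] <+: r) {Q : Γ.Spot}
    (hQ : Q.vertex = e.pos (i + k)) (ha : a ∈ Q.exit.outer[Q.idx]?)
    (hlt : Q.idx + 1 < Q.exit.outer.length) :
    ∃ init' e' i' k', init ++ e.segment i k ++ [a] = init' ++ e'.segment i' k' ∧
      IsRun r q init' e' i' k' := by
  obtain ⟨b, hb_last, hb⟩ := h.exists_last
  have hab : a ≠ letterInv b := by
    rintro rfl
    have := (List.isChain_append.1 ((C.reduced hr).infix hp.isInfix)).2.2 b hb_last _ rfl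
    simp [letterInv] at this
  let P : Γ.Spot := ⟨e, i + k, h.end_pos, h.lt⟩
  rw [Exit.pos_of_lt h.end_pos h.lt] at hQ
  rcases Spot.vertex_eq_iff.1 hQ.symm with hs | hs | hs | hs
  · have hidx : i + k = Q.idx := hs.1
    have hagree : Exit.Agree (i + k) e Q.exit := hs.2
    rw [← hidx] at ha hlt
    exact ⟨init, Q.exit, i, k + 1,
      by rw [List.append_assoc, hagree.segment_eq, Exit.segment_succ ha],
      (h.of_agree hagree (hidx ▸ Q.idx_lt)).concat hlt⟩
  · rcases hs.eq_or_short with rfl | ⟨hend, hstart⟩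
    · have hi := h.end_pos
      have hilt := h.lt
      rw [Spot.flip_exit, Spot.flip_idx, Exit.getElem?_outer_flip (j := i + k - 1)
        (by simp only; omega), hb] at ha
      exact (hab (Option.some_injective _ ha).symm).elim
    · refine ⟨_, Q.exit, Q.idx, 1, ?_, h.turn hr hq ((List.prefix_append _ _).trans hp) ?_ hlt ?_
        hstart⟩
      · rw [Exit.segment_succ (k := 0) ha, Exit.segment_zero_right, List.nil_append]
      · rw [hQ, Exit.pos_of_lt h.end_pos h.lt]
      · rwa [Spot.flip_exit, Exit.length_rel_flip] at hend
  · have hb' := (Spot.share_equivalence.symm hs).getElem?_idx_eq ha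
    rw [show P.exit.outer[P.idx - 1]? = some b from hb] at hb'
    exact (hab (by rw [Option.some_injective _ hb', letterInv_letterInv])).elim
  · have hidx : e.outer.length - (i + k) = Q.exit.outer.length - Q.idx := hs.1
    have ha' : a ∈ e.outer[i + k]? := hs.getElem?_eq_of_flip_flip.trans ha
    exact ⟨init, e, i, k + 1, by rw [Exit.segment_succ ha', List.append_assoc],
      h.concat (by omega)⟩

end IsRun

theorem NextEdge.exists_spot {q q' : Γ.NextV} {a : S × Bool} (h : NextEdge q a q')
    (hq : ∀ x, q ≠ Sum.inl x) (hq' : ∀ x, q' ≠ Sum.inl x) :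
    ∃ Q : Γ.Spot, Q.vertex = q ∧ a ∈ Q.exit.outer[Q.idx]? ∧ Q.idx + 1 < Q.exit.outer.length := by
  rcases h with h | ⟨e, i, ha⟩
  · exact (hq _ rfl).elim
  · have hi : i < e.outer.length := (List.getElem?_eq_some_iff.1 ha).1
    have h0 := (Exit.interior_of_pos_ne_inl hi.le hq).1
    exact ⟨⟨e, i, h0, hi⟩, (Exit.pos_of_lt h0 hi).symm, ha,
      (Exit.interior_of_pos_ne_inl hi hq').2⟩

theorem exists_isRun {r p : Word S} {q q' : Γ.NextV} (hr : r ∈ C.words)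
    (hq : ¬ Γ.nextGraph.Path q r q)
    (hnew : ∀ p, p <+: r → ∀ x, ¬ Γ.nextGraph.Path q p (Sum.inl x)) (hne : p ≠ [])
    (hp : p <+: r) (hpath : Γ.nextGraph.Path q p q') :
    ∃ init e i k, p = init ++ e.segment i k ∧ IsRun r q init e i k := by
  induction p using List.reverseRecOn generalizing q' with
  | nil => exact (hne rfl).elim
  | append_singleton p a ih =>
    have hp' : p <+: r := (List.prefix_append _ _).trans hp
    obtain ⟨z, hz, hedge⟩ := LabelledGraph.path_append.1 hpath
    obtain ⟨Q, rfl, ha, hlt⟩ := (LabelledGraph.path_singleton.1 hedge : NextEdge z a q').exists_spot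
      (fun x hx => hnew _ hp' x (hx ▸ hz)) (fun x hx => hnew _ hp x (hx ▸ hpath))
    rcases eq_or_ne p [] with rfl | hpne
    · refine ⟨[], Q.exit, Q.idx, 1, ?_, ?_, Q.idx_pos, one_pos, hlt, ?_, Or.inl rfl⟩
      · rw [Exit.segment_succ (k := 0) ha, Exit.segment_zero_right]
        rfl
      · rwa [Exit.pos_idx]
      · simpa using List.length_pos_iff.2 (C.ne_nil hr)
    · obtain ⟨init, e, i, k, rfl, hrun⟩ := ih hpne hp' hz
      exact hrun.exists_concat hr hq hp (hz.target_unique hrun.path_append) ha hlt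

/-- A relator meeting an old vertex closes up there; otherwise it is read along a run, in which
both parts are shorter than a sixth of it. -/
theorem nextGraph_closed {r p : Word S} {q q' : Γ.NextV} (hr : r ∈ C.words) (hp : p <+: r)
    (hl : r.length ≤ 3 * p.length) (hpath : Γ.nextGraph.Path q p q') :
    Γ.nextGraph.Path q r q := by
  by_contra hq
  have hnew : ∀ p, p <+: r → ∀ x, ¬ Γ.nextGraph.Path q p (Sum.inl x) := by
    rintro p ⟨w, rfl⟩ x hx
    exact hq (hx.closed_of_rotate (path_relator_inl (C.rotate hr) x))
  have hne : p ≠ [] := by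
    rintro rfl
    exact C.ne_nil hr (List.length_eq_zero_iff.1 (by simpa using hl))
  obtain ⟨init, e, i, k, rfl, hrun⟩ := exists_isRun hr hq hnew hne hp hpath
  have hinit := hrun.init_short
  have hshort := (hrun.short_of_not_closed hr hq hp).1
  rw [List.length_append, Exit.length_segment hrun.lt.le] at hl
  omega

variable (Γ) in
/-- The stage obtained by attaching all relators at all vertices. -/
def next : Stage C where
  toLabelledGraph := Γ.nextGraph
  height := nextHeight
  height_le := nextHeight_le
  closed := nextGraph_closed

variable (C) in
/-- The stage consisting of a single vertex without edges. -/
def point : Stage C where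
  V := PUnit
  Edge _ _ _ := False
  symm h := h.elim
  det h _ := h.elim
  height _ := 0
  height_le h := h.elim
  closed := by
    rintro r (_ | ⟨a, p⟩) x y hr - hl hpath
    · exact (C.ne_nil hr (List.length_eq_zero_iff.1 (by simpa using hl))).elim
    · obtain ⟨z, hz, -⟩ := hpath
      exact hz.elim

end Stage

/-! ### The action on the union of all stages -/

namespace Stage

variable {S : Type u} (C : SymmetrizedRelators S)

/-- The stages of the construction which starts with a single vertex. -/
def iter : ℕ → Stage C
  | 0 => point C
  | n + 1 => (iter n).next

variable {C}

/-- The inclusion of a stage into the next one. -/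
def incl {n : ℕ} (x : (iter C n).V) : (iter C (n + 1)).V := (Sum.inl x : (iter C n).NextV)

variable (C) in
/-- A vertex of a stage precedes its image in the next stage. -/
def LimRel (p q : Σ n, (iter C n).V) : Prop := q = ⟨p.1 + 1, incl p.2⟩

variable (C) in
/-- The vertices of the union of all stages. -/
abbrev Lim : Type u := Quot (LimRel C)

/-- A vertex of a stage as a vertex of the union. -/
def toLim {n : ℕ} (x : (iter C n).V) : Lim C := Quot.mk _ ⟨n, x⟩

theorem toLim_incl {n : ℕ} (x : (iter C n).V) : toLim (incl x) = toLim x :=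
  (Quot.sound (r := LimRel C) (a := ⟨n, x⟩) rfl).symm

theorem exists_toLim (p : Lim C) : ∃ n, ∃ x : (iter C n).V, toLim x = p := by
  obtain ⟨⟨n, x⟩, rfl⟩ := Quot.exists_rep p
  exact ⟨n, x, rfl⟩

/-- The height function on the union of all stages. -/
def limHeight : Lim C → ℤ :=
  Quot.lift (fun p => (iter C p.1).height p.2) (by rintro ⟨n, x⟩ _ rfl; rfl)

theorem limHeight_toLim {n : ℕ} (x : (iter C n).V) :
    limHeight (toLim x) = (iter C n).height x := rfl

variable (C) in
/-- The vertex of the first stage. -/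
def base : Lim C := toLim (n := 0) (PUnit.unit : (point C).V)

end Stage

/-- The letter `a` occurs in one of the relators. -/
def SymmetrizedRelators.Occurs {S : Type u} (C : SymmetrizedRelators S) (a : S × Bool) : Prop :=
  ∃ s, a :: s ∈ C.words

namespace SymmetrizedRelators

variable {S : Type u} {C : SymmetrizedRelators S} {r : Word S} {a : S × Bool}

theorem occurs_of_mem (hr : r ∈ C.words) (ha : a ∈ r) : C.Occurs a := by
  obtain ⟨u, v, rfl⟩ := List.append_of_mem ha
  exact ⟨v ++ u, C.rotate hr⟩

theorem Occurs.letterInv (ha : C.Occurs a) : C.Occurs (letterInv a) := by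
  obtain ⟨s, hs⟩ := ha
  exact occurs_of_mem (C.inv hs) (by simp [invRev_cons_eq])

end SymmetrizedRelators

namespace Stage

variable {S : Type u} {C : SymmetrizedRelators S} {a : S × Bool} {w : Word S}

theorem exists_edge (ha : C.Occurs a) {n : ℕ} (x : (iter C n).V) :
    ∃ z, (iter C (n + 1)).Edge (incl x) a z := by
  obtain ⟨s, hs⟩ := ha
  obtain ⟨z, hz, -⟩ := path_relator_inl hs x
  exact ⟨z, hz⟩

theorem toLim_eq_of_edge {n : ℕ} {x y : (iter C n).V} {z : (iter C (n + 1)).V}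
    (hy : (iter C n).Edge x a y) (hz : (iter C (n + 1)).Edge (incl x) a z) :
    toLim z = toLim y := by
  rw [(iter C (n + 1)).det hz (NextEdge.old hy), ← toLim_incl]
  rfl

open Classical in
/-- The action of a letter on the union of all stages: it moves each vertex along the edge with
this label. Letters which do not occur in relators, for which there are no edges, act trivially. -/
noncomputable def act (a : S × Bool) : Lim C → Lim C :=
  if ha : C.Occurs a then
    Quot.lift (fun p => toLim (exists_edge ha p.2).choose) (by
      rintro ⟨n, x⟩ _ rfl
      exact (toLim_eq_of_edge (exists_edge ha x).choose_spec
        (exists_edge ha (incl x)).choose_spec).symm)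
  else id

theorem act_of_edge (ha : C.Occurs a) {n : ℕ} {x y : (iter C n).V} (h : (iter C n).Edge x a y) :
    act a (toLim x) = toLim y := by
  rw [act, dif_pos ha]
  exact toLim_eq_of_edge h (exists_edge ha x).choose_spec

theorem act_of_not_occurs (ha : ¬ C.Occurs a) (p : Lim C) : act a p = p := by
  rw [act, dif_neg ha, id]

theorem act_letterInv_act (a : S × Bool) (p : Lim C) : act (letterInv a) (act a p) = p := by
  by_cases ha : C.Occurs a
  · obtain ⟨n, x, rfl⟩ := exists_toLim p
    obtain ⟨z, hz⟩ := exists_edge ha x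
    rw [← toLim_incl, act_of_edge ha hz, act_of_edge ha.letterInv ((iter C _).symm hz)]
  · have ha' : ¬ C.Occurs (letterInv a) := fun h => ha (letterInv_letterInv a ▸ h.letterInv)
    rw [act_of_not_occurs ha, act_of_not_occurs ha']

theorem limHeight_act_le (a : S × Bool) (p : Lim C) :
    limHeight (act a p) ≤ limHeight p + 1 := by
  by_cases ha : C.Occurs a
  · obtain ⟨n, x, rfl⟩ := exists_toLim p
    obtain ⟨z, hz⟩ := exists_edge ha x
    rw [← toLim_incl, act_of_edge ha hz, limHeight_toLim, limHeight_toLim]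
    exact (iter C _).height_le hz
  · rw [act_of_not_occurs ha]
    omega

/-- The action of a letter as a permutation. -/
noncomputable def actPerm (a : S × Bool) : Equiv.Perm (Lim C) where
  toFun := act a
  invFun := act (letterInv a)
  left_inv := act_letterInv_act a
  right_inv p := by simpa using act_letterInv_act (letterInv a) p

variable (C) in
/-- The action of the free group on the union of all stages. It is a right action, since words
label paths from left to right. -/
noncomputable def actHom : FreeGroup S →* (Equiv.Perm (Lim C))ᵐᵒᵖ :=
  FreeGroup.lift fun s => MulOpposite.op (actPerm (s, true))

theorem actHom_mk_singleton (a : S × Bool) :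
    actHom C (FreeGroup.mk [a]) = MulOpposite.op (actPerm a) := by
  rw [actHom, FreeGroup.lift_mk, List.map_singleton, List.prod_singleton]
  obtain ⟨s, _ | _⟩ := a <;> rfl

/-- Where the path labelled `w` starting at `p` ends. -/
noncomputable def walk (p : Lim C) (w : Word S) : Lim C := (actHom C (FreeGroup.mk w)).unop p

theorem walk_nil (p : Lim C) : walk p [] = p := by
  rw [walk, ← FreeGroup.one_eq_mk, map_one]
  rfl

theorem walk_append (p : Lim C) (v w : Word S) : walk p (v ++ w) = walk (walk p v) w := by
  rw [walk, ← FreeGroup.mul_mk, map_mul]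
  rfl

theorem walk_cons (p : Lim C) (a : S × Bool) (w : Word S) :
    walk p (a :: w) = walk (act a p) w := by
  rw [← List.singleton_append, walk_append, walk.eq_def p, actHom_mk_singleton]
  rfl

theorem limHeight_walk_le (p : Lim C) (w : Word S) :
    limHeight (walk p w) ≤ limHeight p + w.length := by
  induction w generalizing p with
  | nil => simp [walk_nil]
  | cons a w ih =>
    push_cast [walk_cons, List.length_cons]
    linarith [ih (act a p), limHeight_act_le a p]

theorem walk_toLim {n : ℕ} {x y : (iter C n).V} (hw : ∀ a ∈ w, C.Occurs a)
    (h : (iter C n).Path x w y) : walk (toLim x) w = toLim y := by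
  induction w generalizing x with
  | nil => rw [walk_nil, h]
  | cons a w ih =>
    obtain ⟨z, hz, h⟩ := h
    rw [List.forall_mem_cons] at hw
    rw [walk_cons, act_of_edge hw.1 hz, ih hw.2 h]

theorem actHom_relator {r : Word S} (hr : r ∈ C.words) : actHom C (FreeGroup.mk r) = 1 := by
  refine MulOpposite.unop_injective (Equiv.ext fun p => ?_)
  obtain ⟨n, x, rfl⟩ := exists_toLim p
  rw [← toLim_incl]
  exact walk_toLim (fun a ha => C.occurs_of_mem hr ha) (path_relator_inl hr x)

/-- The relator is carried by an exit of the one-vertex stage whose `inner` is empty. -/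
theorem limHeight_walk_base {r : Word S} (hr : r ∈ C.words) {i : ℕ} (hi : i ≤ r.length) :
    limHeight (walk (base C) (r.take i)) = min (i : ℤ) (r.length - i) := by
  obtain ⟨a, s, rfl⟩ := List.exists_cons_of_ne_nil (C.ne_nil hr)
  let e : (point C).Exit :=
    ⟨⟨⟩, ⟨⟩, a :: s, [], by rwa [List.append_nil], by simp, rfl, fun _ _ _ => id, fun _ _ _ => id⟩
  have hpath := e.path_segment (i := 0) (k := i) (by rwa [zero_add])
  rw [Exit.segment_zero_left, Exit.pos_zero, zero_add] at hpath
  have hwalk := walk_toLim (n := 1)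
    (fun b hb => C.occurs_of_mem hr (List.mem_of_mem_take hb)) hpath
  have hbase : toLim (n := 1) (incl (n := 0) (C := C) PUnit.unit) = base C := toLim_incl _
  have hheight : limHeight (toLim (n := 1) (e.pos i)) = e.height i := nextHeight_pos e hi
  rw [← hbase]
  refine (congrArg limHeight hwalk).trans (hheight.trans ?_)
  simp [Exit.height, e, point]

end Stage

/-! ### Distances between vertices of relator cycles -/

section SymmClosure

variable {S : Type u} {R : Set (Word S)} {r v w : Word S}

theorem exists_append_of_isRotated (h : v ~r w) : ∃ u₁ u₂, v = u₁ ++ u₂ ∧ w = u₂ ++ u₁ := by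
  obtain ⟨n, hn, rfl⟩ := List.isRotated_iff_mod.1 h
  exact ⟨v.take n, v.drop n, (List.take_append_drop n v).symm, List.rotate_eq_drop_append_take hn⟩

theorem isRotated_invRev (h : v ~r w) : FreeGroup.invRev v ~r FreeGroup.invRev w :=
  (h.map letterInv).reverse

theorem isReduced_invRev (hw : FreeGroup.IsReduced w) :
    FreeGroup.IsReduced (FreeGroup.invRev w) := by
  classical
  exact FreeGroup.IsReduced.of_reduce_eq (by rw [FreeGroup.reduce_invRev, hw.reduce_eq])

theorem isReduced_of_isRotated (hv : FreeGroup.IsCyclicallyReduced v) (h : v ~r w) :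
    FreeGroup.IsReduced w := by
  obtain ⟨u₁, u₂, rfl, rfl⟩ := exists_append_of_isRotated h
  obtain ⟨h₁, h₂, -⟩ := List.isChain_append.1 hv.1
  refine List.isChain_append.2 ⟨h₂, h₁, fun a ha b hb => hv.2 a ?_ b ?_⟩
  · rw [List.getLast?_append, ha]
    rfl
  · rw [List.head?_append, hb]
    rfl

theorem mem_symmClosure_of_isRotated (hv : v ∈ symmClosure R) (h : v ~r w) :
    w ∈ symmClosure R := by
  obtain ⟨r, hr, hrv⟩ := hv
  exact ⟨r, hr, hrv.imp (·.trans h) (·.trans h)⟩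

theorem invRev_mem_symmClosure (hw : w ∈ symmClosure R) :
    FreeGroup.invRev w ∈ symmClosure R := by
  obtain ⟨r, hr, h | h⟩ := hw
  · exact ⟨r, hr, Or.inr (isRotated_invRev h)⟩
  · exact ⟨r, hr, Or.inl (FreeGroup.invRev_invRev (L₁ := r) ▸ isRotated_invRev h)⟩

theorem isReduced_of_mem_symmClosure (hR : ∀ r ∈ R, FreeGroup.IsCyclicallyReduced r)
    (hw : w ∈ symmClosure R) : FreeGroup.IsReduced w := by
  obtain ⟨r, hr, h | h⟩ := hw
  · exact isReduced_of_isRotated (hR r hr) h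
  · rw [← FreeGroup.invRev_invRev (L₁ := w)]
    refine isReduced_invRev (isReduced_of_isRotated (hR r hr) ?_)
    exact FreeGroup.invRev_invRev (L₁ := r) ▸ isRotated_invRev h

theorem evalWord_eq_one_of_mem (hr : r ∈ R) : evalWord R r = 1 :=
  PresentedGroup.one_of_mem ⟨r, hr, rfl⟩

theorem evalWord_eq_one_of_isRotated (h : v ~r w) (hv : evalWord R v = 1) : evalWord R w = 1 := by
  obtain ⟨u₁, u₂, rfl, rfl⟩ := exists_append_of_isRotated h
  rw [evalWord_append] at hv ⊢
  exact mul_eq_one_comm.1 hv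

theorem evalWord_eq_one_of_mem_symmClosure (hw : w ∈ symmClosure R) : evalWord R w = 1 := by
  obtain ⟨r, hr, h | h⟩ := hw
  · exact evalWord_eq_one_of_isRotated h (evalWord_eq_one_of_mem hr)
  · exact evalWord_eq_one_of_isRotated h
      (by rw [evalWord_invRev, evalWord_eq_one_of_mem hr, inv_one])

/-- The nonempty words in the symmetric closure of a set of relators satisfying `C'(1/6)`. -/
def SmallCancellation.symmetrized (hR : SmallCancellation (1 / 6) R) : SymmetrizedRelators S where
  words := symmClosure R \ {[]}
  ne_nil h := h.2
  rotate h := ⟨mem_symmClosure_of_isRotated h.1 List.isRotated_append,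
    fun h' => h.2 (List.isRotated_nil_iff.1 (h' ▸ List.isRotated_append))⟩
  inv h := ⟨invRev_mem_symmClosure h.1, by simpa [FreeGroup.invRev] using h.2⟩
  reduced h := isReduced_of_mem_symmClosure hR.1 h.1
  piece {r r' p} hr hr' hne hp hp' := by
    have h := hR.2 r hr.1 p ⟨r, hr.1, r', hr'.1, hne, hp, hp'⟩ hp.isInfix
    have h' : (6 : ℝ) * p.length < r.length := by linarith
    exact_mod_cast h'

end SymmClosure

section WordDist

variable {S : Type u} {R : Set (Word S)} {r : Word S}

theorem wordDist_mul_left (g h k : PGroup R) : wordDist R (g * h) (g * k) = wordDist R h k := by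
  simp only [wordDist, mul_assoc, mul_right_inj]

/-- The action of the free group on the union of all stages factors through `⟨S | R⟩`, so distances
from `1` are at least the heights over the base vertex. -/
theorem limHeight_walk_le_wordDist (hR : SmallCancellation (1 / 6) R) (w : Word S) :
    Stage.limHeight (Stage.walk (Stage.base hR.symmetrized) w) ≤ wordDist R 1 (evalWord R w) := by
  have hker : ∀ x ∈ FreeGroup.mk '' R, Stage.actHom hR.symmetrized x = 1 := by
    rintro _ ⟨s, hs, rfl⟩
    rcases eq_or_ne s [] with rfl | hne
    · exact map_one _
    · exact Stage.actHom_relator ⟨⟨s, hs, Or.inl (List.IsRotated.refl s)⟩, hne⟩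
  obtain ⟨v, hv, hvw⟩ := exists_word (R := R) 1 (evalWord R w)
  rw [one_mul] at hvw
  have hact : Stage.actHom hR.symmetrized (FreeGroup.mk v) = Stage.actHom _ (FreeGroup.mk w) :=
    congrArg (PresentedGroup.toGroup hker) hvw
  rw [Stage.walk, ← hact, ← hv, ← zero_add (v.length : ℤ)]
  exact Stage.limHeight_walk_le _ v

theorem min_le_wordDist_one (hR : SmallCancellation (1 / 6) R) (hr : r ∈ hR.symmetrized.words)
    {i : ℕ} (hi : i ≤ r.length) :
    min i (r.length - i) ≤ wordDist R 1 (evalWord R (r.take i)) := by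
  have := limHeight_walk_le_wordDist hR (r.take i)
  rw [Stage.limHeight_walk_base hr hi] at this
  omega

variable (R) in
/-- The `i`-th vertex of the edge path which starts at `g` and is labelled by `w`. -/
def pathVertex (g : PGroup R) (w : Word S) (i : ℕ) : PGroup R := g * evalWord R (w.take i)

theorem pathVertex_cons_succ (g : PGroup R) (a : S × Bool) (w : Word S) (i : ℕ) :
    pathVertex R g (a :: w) (i + 1) = pathVertex R (g * evalWord R [a]) w i := by
  rw [pathVertex, pathVertex, List.take_succ_cons, ← List.singleton_append, evalWord_append,
    mul_assoc]

theorem pathVertex_succ (g : PGroup R) {w : Word S} {i : ℕ} (hi : i < w.length) :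
    pathVertex R g w (i + 1) = pathVertex R g w i * evalWord R [w[i]] := by
  rw [pathVertex, pathVertex, mul_assoc, ← evalWord_append, List.take_concat_get' w i hi]

/-- After rotating the relator, the earlier vertex may be assumed to be its starting point. -/
theorem min_le_wordDist_pathVertex (hR : SmallCancellation (1 / 6) R)
    (hr : r ∈ hR.symmetrized.words) (g : PGroup R) {i j : ℕ} (hij : i ≤ j) (hj : j ≤ r.length) :
    min (j - i) (r.length - (j - i)) ≤ wordDist R (pathVertex R g r i) (pathVertex R g r j) := by
  have hrot : r.drop i ++ r.take i ∈ hR.symmetrized.words :=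
    hR.symmetrized.rotate (by rwa [List.take_append_drop])
  have hlen : (r.drop i ++ r.take i).length = r.length := by
    rw [List.length_append, List.length_drop, List.length_take]
    omega
  have htake : r.take j = r.take i ++ (r.drop i ++ r.take i).take (j - i) := by
    rw [List.take_append_of_le_length (by rw [List.length_drop]; omega), ← List.take_add,
      Nat.add_sub_cancel' hij]
  have hone : pathVertex R g r i = pathVertex R g r i * 1 := (mul_one _).symm
  rw [hone, pathVertex, pathVertex, htake, evalWord_append, ← mul_assoc, wordDist_mul_left, ← hlen]
  exact min_le_wordDist_one hR hrot (by omega)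

theorem min_abs_le_wordDist_pathVertex (hR : SmallCancellation (1 / 6) R)
    (hr : r ∈ hR.symmetrized.words) (g : PGroup R) {i j : ℕ} (hi : i ≤ r.length)
    (hj : j ≤ r.length) : min |(i : ℝ) - j| (r.length - |(i : ℝ) - j|) ≤
      wordDist R (pathVertex R g r i) (pathVertex R g r j) := by
  wlog hij : i ≤ j generalizing i j
  · rw [abs_sub_comm, wordDist_comm]
    exact this hj hi (le_of_not_ge hij)
  · have h := min_le_wordDist_pathVertex hR hr g hij hj
    rw [abs_sub_comm, abs_of_nonneg (sub_nonneg.2 (Nat.cast_le.2 hij)), ← Nat.cast_sub hij,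
      ← Nat.cast_sub (by omega)]
    exact_mod_cast h

theorem eq_or_ends_of_pathVertex_eq (hR : SmallCancellation (1 / 6) R)
    (hr : r ∈ hR.symmetrized.words) {g : PGroup R} {i j : ℕ} (hi : i ≤ r.length)
    (hj : j ≤ r.length) (h : pathVertex R g r i = pathVertex R g r j) :
    i = j ∨ (i = 0 ∧ j = r.length) ∨ (i = r.length ∧ j = 0) := by
  rcases le_total i j with hij | hij
  · have := min_le_wordDist_pathVertex hR hr g hij hj
    rw [h, wordDist_self] at this
    omega
  · have := min_le_wordDist_pathVertex hR hr g hij hi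
    rw [h, wordDist_self] at this
    omega

end WordDist

/-! ### Isometrically embedded loops -/

/-- On `[0, n]`, the path `γ` is an isometrically embedded circle of length `n`. -/
def IsIsometricLoop {X : Type*} [MetricSpace X] (n : ℝ) (γ : ℝ → X) : Prop :=
  ∀ s ∈ Set.Icc 0 n, ∀ t ∈ Set.Icc 0 n, dist (γ s) (γ t) = min |s - t| (n - |s - t|)

namespace IsIsometricLoop

variable {X : Type*} [MetricSpace X] {n N l : ℝ} {γ : ℝ → X}

theorem closed (hγ : IsIsometricLoop n γ) (hn : 0 ≤ n) : γ n = γ 0 := by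
  rw [← dist_eq_zero, hγ n (Set.right_mem_Icc.2 hn) 0 (Set.left_mem_Icc.2 hn), sub_zero,
    abs_of_nonneg hn, sub_self, min_eq_right hn]

theorem lipschitzOnWith (hγ : IsIsometricLoop n γ) : LipschitzOnWith 1 γ (Set.Icc 0 n) :=
  LipschitzOnWith.of_dist_le_mul fun s hs t ht => by
    rw [hγ s hs t ht, NNReal.coe_one, one_mul, Real.dist_eq]
    exact min_le_left _ _

/-- On the complement of an initial part of length `n / N`, going around the other way saves at
most a factor of `N`. -/
theorem isQuasiGeodesicOn_complement (hγ : IsIsometricLoop n γ) (hn : 0 ≤ n) (hN : 1 ≤ N) :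
    IsQuasiGeodesicOn N (Set.Icc 0 (n - n / N)) (fun t => γ (n - t)) := by
  have hnN : 0 ≤ n / N := div_nonneg hn (by linarith)
  have hmaps : Set.MapsTo (n - ·) (Set.Icc 0 (n - n / N)) (Set.Icc 0 n) := fun t ht =>
    ⟨by linarith [ht.2], by linarith [ht.1]⟩
  refine ⟨hγ.lipschitzOnWith.continuousOn.comp (by fun_prop) hmaps, fun s hs t ht => ?_⟩
  rw [hγ _ (hmaps hs) _ (hmaps ht), sub_sub_sub_cancel_left]
  have hle : |t - s| ≤ n - n / N := abs_sub_le_of_nonneg_of_le ht.1 ht.2 hs.1 hs.2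
  have hdiv : |t - s| / N ≤ n / N := by gcongr; linarith
  have hdiv' : |t - s| / N ≤ |t - s| := div_le_self (abs_nonneg _) hN
  have hmul : |t - s| ≤ N * |t - s| := le_mul_of_one_le_left (abs_nonneg _) hN
  exact ⟨le_min (by linarith) (by linarith), (min_le_left _ _).trans (by linarith)⟩

theorem le_infEDist_midpoint (hγ : IsIsometricLoop n γ) (hl : 0 ≤ l) (hln : l ≤ n) :
    ENNReal.ofReal ((n - l) / 2) ≤
      Metric.infEDist (γ (n - (n - l) / 2)) (γ '' Set.Icc 0 l) := by
  rw [Metric.le_infEDist]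
  rintro _ ⟨t, ⟨ht0, htl⟩, rfl⟩
  rw [edist_dist, hγ _ ⟨by linarith, by linarith⟩ t ⟨ht0, htl.trans hln⟩,
    abs_of_nonneg (by linarith)]
  exact ENNReal.ofReal_le_ofReal (le_min (by linarith) (by linarith))

/-- The complement of `γ [0, n / N]` is an `N`-quasi-geodesic with the same ends, whose midpoint is
at distance `(n - n / N) / 2` from `γ [0, n / N]`. -/
theorem le_of_isMorseQuasiGeodesicOn (hγ : IsIsometricLoop n γ) (hn : 0 ≤ n) (hN : 1 < N)
    {M : ℝ → ℝ} (hM : 0 ≤ M N) {η : ℝ → X} (hη : IsMorseQuasiGeodesicOn M (Set.Icc 0 l) η)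
    (hηγ : Set.EqOn η γ (Set.Icc 0 l)) (hl : n / N ≤ l) : n ≤ 2 * N / (N - 1) * M N := by
  have hnN : 0 ≤ n / N := div_nonneg hn (by linarith)
  have hnN' : n / N ≤ n := div_le_self hn hN.le
  have h0 : (0 : ℝ) ∈ Set.Icc 0 l := ⟨le_rfl, hnN.trans hl⟩
  have h1 : n / N ∈ Set.Icc 0 l := ⟨hnN, hl⟩
  have himage : η '' Set.Icc 0 (n / N) = γ '' Set.Icc 0 (n / N) :=
    (hηγ.mono (Set.Icc_subset_Icc_right hl)).image_eq
  have hnear := hη.2 N hN.le 0 h0 (n / N) h1 hnN (fun t => γ (n - t)) 0 (n - n / N) (by linarith)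
    (hγ.isQuasiGeodesicOn_complement hn hN.le) (by rw [hηγ h0, sub_zero, hγ.closed hn])
    (by rw [hηγ h1, sub_sub_cancel]) ⟨(n - n / N) / 2, ⟨by linarith, by linarith⟩, rfl⟩
  rw [himage, Metric.mem_cthickening_iff] at hnear
  have hle : (n - n / N) / 2 ≤ M N :=
    (ENNReal.ofReal_le_ofReal_iff hM).1 ((hγ.le_infEDist_midpoint hnN hnN').trans hnear)
  calc n = 2 * N / (N - 1) * ((n - n / N) / 2) := by
        field_simp [(sub_pos.2 hN).ne']
    _ ≤ 2 * N / (N - 1) * M N := by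
        have := sub_pos.2 hN
        gcongr

end IsIsometricLoop

/-! ### Edge paths in the Cayley graph -/

section EdgePath

variable {S : Type u} {R : Set (Word S)} {g h : PGroup R} {a b : S × Bool} {r v w : Word S}
  {s t c : ℝ}

variable (R) in
/-- The name of `edgePoint R g a t`. -/
noncomputable def edgePrePoint (g : PGroup R) (a : S × Bool) (t : ℝ) : PrePoint R :=
  if a.2 then PrePoint.edge g a.1 (Set.projIcc 0 1 zero_le_one t)
  else PrePoint.edge (g * (PresentedGroup.of a.1)⁻¹) a.1
    (unitInterval.symm (Set.projIcc 0 1 zero_le_one t))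

theorem edgePoint_eq_mk (g : PGroup R) (a : S × Bool) (t : ℝ) :
    edgePoint R g a t = SeparationQuotient.mk (edgePrePoint R g a t) := rfl

theorem evalWord_nil : evalWord R [] = 1 := rfl

theorem evalWord_singleton_true (x : S) : evalWord R [(x, true)] = PresentedGroup.of x := rfl

theorem evalWord_singleton_false (x : S) :
    evalWord R [(x, false)] = (PresentedGroup.of x)⁻¹ := by
  rw [← evalWord_singleton_true, ← evalWord_invRev]
  rfl

theorem edgePrePoint_vert_source (g : PGroup R) (a : S × Bool) (t : ℝ) :
    (edgePrePoint R g a t).vert (!a.2) = g := by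
  obtain ⟨x, _ | _⟩ := a <;> simp [edgePrePoint, PrePoint.vert]

theorem edgePrePoint_vert_target (g : PGroup R) (a : S × Bool) (t : ℝ) :
    (edgePrePoint R g a t).vert a.2 = g * evalWord R [a] := by
  obtain ⟨x, _ | _⟩ := a
  · simp [edgePrePoint, PrePoint.vert, evalWord_singleton_false]
  · simp [edgePrePoint, PrePoint.vert, evalWord_singleton_true]

theorem edgePrePoint_off_source (g : PGroup R) (a : S × Bool) (ht : t ∈ Set.Icc (0 : ℝ) 1) :
    (edgePrePoint R g a t).off (!a.2) = t := by
  obtain ⟨x, _ | _⟩ := a <;>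
    simp [edgePrePoint, PrePoint.off, Set.projIcc_of_mem zero_le_one ht]

theorem edgePrePoint_off_target (g : PGroup R) (a : S × Bool) (ht : t ∈ Set.Icc (0 : ℝ) 1) :
    (edgePrePoint R g a t).off a.2 = 1 - t := by
  obtain ⟨x, _ | _⟩ := a <;>
    simp [edgePrePoint, PrePoint.off, Set.projIcc_of_mem zero_le_one ht]

theorem same_edgePrePoint (g : PGroup R) (a : S × Bool) (s t : ℝ) :
    PrePoint.Same (edgePrePoint R g a s) (edgePrePoint R g a t)
      |(Set.projIcc (0 : ℝ) 1 zero_le_one s : ℝ) - Set.projIcc (0 : ℝ) 1 zero_le_one t| := by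
  obtain ⟨x, _ | _⟩ := a
  · refine ⟨_, x, _, _, rfl, rfl, ?_⟩
    rw [unitInterval.coe_symm_eq, unitInterval.coe_symm_eq, sub_sub_sub_cancel_left, abs_sub_comm]
  · exact ⟨g, x, _, _, rfl, rfl, rfl⟩

theorem mk_eq_mk_vertex {x : PrePoint R} {i : Bool} (hx : x.off i = 0) :
    (SeparationQuotient.mk x : Cay R) = SeparationQuotient.mk (PrePoint.vertex (x.vert i)) := by
  rw [← dist_le_zero, SeparationQuotient.dist_mk]
  refine (PrePoint.pdist_le_via x (PrePoint.vertex (x.vert i)) i i).trans_eq ?_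
  rw [PrePoint.via, hx, PrePoint.vert, wordDist_self, PrePoint.off, Nat.cast_zero, add_zero,
    add_zero]

theorem edgePoint_zero (g : PGroup R) (a : S × Bool) :
    edgePoint R g a 0 = SeparationQuotient.mk (PrePoint.vertex g) := by
  rw [edgePoint_eq_mk, mk_eq_mk_vertex (edgePrePoint_off_source g a ⟨le_rfl, zero_le_one⟩),
    edgePrePoint_vert_source]

theorem edgePoint_one (g : PGroup R) (a : S × Bool) :
    edgePoint R g a 1 = SeparationQuotient.mk (PrePoint.vertex (g * evalWord R [a])) := by
  rw [edgePoint_eq_mk, mk_eq_mk_vertex (i := a.2), edgePrePoint_vert_target]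
  rw [edgePrePoint_off_target g a ⟨zero_le_one, le_rfl⟩, sub_self]

theorem lipschitzWith_edgePoint (g : PGroup R) (a : S × Bool) :
    LipschitzWith 1 (edgePoint R g a) :=
  LipschitzWith.of_dist_le_mul fun s t => by
    rw [edgePoint_eq_mk, edgePoint_eq_mk, SeparationQuotient.dist_mk, NNReal.coe_one, one_mul,
      Real.dist_eq]
    exact (PrePoint.pdist_le_same (same_edgePrePoint g a s t)).trans
      (Set.abs_projIcc_sub_projIcc zero_le_one)

theorem edgePath_zero (g : PGroup R) (w : Word S) :
    edgePath R g w 0 = SeparationQuotient.mk (PrePoint.vertex g) := by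
  cases w with
  | nil => rfl
  | cons a w => rw [edgePath, if_pos zero_le_one, edgePoint_zero]

theorem edgePath_length (g : PGroup R) (w : Word S) :
    edgePath R g w w.length = SeparationQuotient.mk (PrePoint.vertex (g * evalWord R w)) := by
  induction w generalizing g with
  | nil => rw [edgePath, evalWord_nil, mul_one]
  | cons a w ih =>
    rw [edgePath, List.length_cons, Nat.cast_succ]
    split_ifs with hw
    · obtain rfl : w = [] := List.length_eq_zero_iff.1 (Nat.le_zero.1 (by
        have : (w.length : ℝ) ≤ 0 := by linarith
        exact_mod_cast this))
      rw [List.length_nil, Nat.cast_zero, zero_add, edgePoint_one]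
    · rw [add_sub_cancel_right, ih, mul_assoc, ← evalWord_append, List.singleton_append]

theorem lipschitzWith_ite_le {X : Type*} [PseudoMetricSpace X] {K : NNReal} {f f' : ℝ → X}
    (hf : LipschitzWith K f) (hf' : LipschitzWith K f') {c : ℝ} (hc : f c = f' c) :
    LipschitzWith K fun t => if t ≤ c then f t else f' t := by
  refine LipschitzWith.of_dist_le_mul fun s t => ?_
  wlog hst : s ≤ t generalizing s t
  · rw [dist_comm, dist_comm s t]
    exact this t s (le_of_not_ge hst)
  rcases le_or_gt t c with htc | htc
  · simpa only [if_pos htc, if_pos (hst.trans htc)] using hf.dist_le_mul s t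
  rcases le_or_gt s c with hsc | hsc
  · simp only [if_pos hsc, if_neg htc.not_ge]
    calc dist (f s) (f' t) ≤ dist (f s) (f c) + dist (f' c) (f' t) := hc ▸ dist_triangle _ _ _
      _ ≤ K * dist s c + K * dist c t := add_le_add (hf.dist_le_mul s c) (hf'.dist_le_mul c t)
      _ = K * dist s t := by
        rw [← mul_add, Real.dist_eq, Real.dist_eq, Real.dist_eq, abs_sub_comm s c,
          abs_sub_comm c t, abs_sub_comm s t, abs_of_nonneg (sub_nonneg.2 hsc),
          abs_of_nonneg (sub_nonneg.2 htc.le), abs_of_nonneg (sub_nonneg.2 hst)]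
        ring
  · simpa only [if_neg htc.not_ge, if_neg hsc.not_ge] using hf'.dist_le_mul s t

theorem lipschitzWith_edgePath (g : PGroup R) (w : Word S) : LipschitzWith 1 (edgePath R g w) := by
  induction w generalizing g with
  | nil => exact LipschitzWith.const' _
  | cons a w ih =>
    refine lipschitzWith_ite_le (lipschitzWith_edgePoint g a)
      (LipschitzWith.of_dist_le_mul fun s t => ?_) ?_
    · rw [← dist_sub_right s t 1]
      exact (ih _).dist_le_mul _ _
    · rw [edgePoint_one, sub_self, edgePath_zero]

theorem edgePath_append (hw : w ≠ []) (ht : t ≤ w.length) :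
    edgePath R g (w ++ v) t = edgePath R g w t := by
  induction w generalizing g t with
  | nil => exact (hw rfl).elim
  | cons a w ih =>
    rw [List.length_cons, Nat.cast_succ] at ht
    rw [List.cons_append, edgePath, edgePath]
    split_ifs with h
    · rfl
    · refine ih ?_ (by linarith)
      rintro rfl
      exact h (by simpa using ht)

variable (R) in
/-- The name of the point reached at time `t` by the edge path which starts at `g` and is labelled
by `w`, if at this time it is on its `k`-th edge (counting from `0`). -/
noncomputable def pathPrePoint (g : PGroup R) (w : Word S) (k : Fin w.length) (t : ℝ) :
    PrePoint R :=
  edgePrePoint R (pathVertex R g w k) w[k] (t - (k : ℕ))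

theorem exists_edgePath_eq (g : PGroup R) (hw : w ≠ []) (ht : t ∈ Set.Icc (0 : ℝ) w.length) :
    ∃ k : Fin w.length, t - (k : ℕ) ∈ Set.Icc (0 : ℝ) 1 ∧
      edgePath R g w t = SeparationQuotient.mk (pathPrePoint R g w k t) := by
  induction w generalizing g t with
  | nil => exact (hw rfl).elim
  | cons a w ih =>
    rw [List.length_cons, Nat.cast_succ] at ht
    rw [edgePath]
    split_ifs with h
    · refine ⟨⟨0, Nat.succ_pos _⟩, by simpa using ⟨ht.1, h⟩, ?_⟩
      simp [edgePoint_eq_mk, pathPrePoint, pathVertex, evalWord_nil]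
    · have hw' : w ≠ [] := by
        rintro rfl
        exact h (by simpa using ht.2)
      obtain ⟨k, hk, heq⟩ := ih (g * evalWord R [a]) hw' (t := t - 1)
        ⟨by linarith, by linarith [ht.2]⟩
      have hsub : t - ((k + 1 : ℕ) : ℝ) = t - 1 - (k : ℕ) := by
        push_cast
        ring
      refine ⟨k.succ, ?_, ?_⟩
      · rwa [Fin.val_succ, hsub]
      · rw [heq, pathPrePoint, pathPrePoint, Fin.val_succ, hsub, pathVertex_cons_succ]
        rfl

theorem exists_vert_pathPrePoint_eq {k : Fin w.length} (hk : t - (k : ℕ) ∈ Set.Icc (0 : ℝ) 1)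
    (i : Bool) : ∃ l ≤ w.length, (pathPrePoint R g w k t).vert i = pathVertex R g w l ∧
      (pathPrePoint R g w k t).off i = |t - l| := by
  rcases Bool.eq_or_eq_not i w[k].2 with rfl | rfl
  · refine ⟨k + 1, k.2, ?_, ?_⟩
    · rw [pathPrePoint, edgePrePoint_vert_target]
      exact (pathVertex_succ g k.2).symm
    · rw [pathPrePoint, edgePrePoint_off_target _ _ hk, Nat.cast_succ, abs_sub_comm,
        abs_of_nonneg (by linarith [hk.2])]
      ring
  · exact ⟨k, k.2.le, edgePrePoint_vert_source _ _ _, by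
      rw [pathPrePoint, edgePrePoint_off_source _ _ hk, abs_of_nonneg hk.1]⟩

theorem PrePoint.Same.eq_abs_off_sub {x y : PrePoint R} (hxy : PrePoint.Same x y c) (i : Bool) :
    c = |x.off i - y.off i| := by
  obtain ⟨_, _, _, _, rfl, rfl, rfl⟩ := hxy
  cases i with
  | false => rfl
  | true => rw [PrePoint.off, PrePoint.off, sub_sub_sub_cancel_left, abs_sub_comm]

theorem fst_eq_of_edgePrePoint_eq {x : S} {z : unitInterval}
    (heq : edgePrePoint R g a t = PrePoint.edge h x z) : a.1 = x := by
  unfold edgePrePoint at heq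
  split_ifs at heq <;> injection heq

theorem eq_or_eq_letterInv_of_same
    (hsame : PrePoint.Same (edgePrePoint R g a s) (edgePrePoint R h b t) c) :
    g = h ∧ a = b ∨ g = h * evalWord R [b] ∧ g * evalWord R [a] = h ∧ a = letterInv b := by
  have hfst : a.1 = b.1 := by
    obtain ⟨_, _, _, _, ha, hb, -⟩ := hsame
    rw [fst_eq_of_edgePrePoint_eq ha, fst_eq_of_edgePrePoint_eq hb]
  have hsource := hsame.vert_eq (!a.2)
  have htarget := hsame.vert_eq a.2
  rw [edgePrePoint_vert_source] at hsource
  rw [edgePrePoint_vert_target] at htarget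
  rcases Bool.eq_or_eq_not a.2 b.2 with hsnd | hsnd
  · rw [hsnd, edgePrePoint_vert_source] at hsource
    exact Or.inl ⟨hsource, Prod.ext hfst hsnd⟩
  · rw [hsnd, Bool.not_not, edgePrePoint_vert_target] at hsource
    rw [hsnd, edgePrePoint_vert_source] at htarget
    exact Or.inr ⟨hsource, htarget, Prod.ext hfst hsnd⟩

end EdgePath

section RelatorCycle

variable {S : Type u} {R : Set (Word S)} {g : PGroup R} {r : Word S} {s t c : ℝ}

/-- Consecutive edges of a relator cycle are distinct because relators are reduced, other ones
because they have different ends. -/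
theorem eq_of_same_pathPrePoint (hR : SmallCancellation (1 / 6) R)
    (hr : r ∈ hR.symmetrized.words) {k l : Fin r.length}
    (hsame : PrePoint.Same (pathPrePoint R g r k s) (pathPrePoint R g r l t) c) : k = l := by
  rcases eq_or_eq_letterInv_of_same hsame with ⟨hv, -⟩ | ⟨hv, hv', hinv⟩
  · have := eq_or_ends_of_pathVertex_eq hR hr k.2.le l.2.le hv
    omega
  · have hkl := eq_or_ends_of_pathVertex_eq hR hr k.2.le l.2 (hv.trans (pathVertex_succ g l.2).symm)
    have hlk := eq_or_ends_of_pathVertex_eq hR hr k.2 l.2.le ((pathVertex_succ g k.2).trans hv')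
    have hred := hR.symmetrized.reduced hr
    have hk : r[(k : ℕ)]? = some r[k] := List.getElem?_eq_getElem k.2
    have hl : r[(l : ℕ)]? = some r[l] := List.getElem?_eq_getElem l.2
    rcases (by omega : k = l ∨ (k : ℕ) = l + 1 ∨ (l : ℕ) = k + 1) with heq | hsucc | hsucc
    · exact heq
    · exact (getElem?_succ_ne_letterInv_of_isReduced hred hl (by rw [← hsucc, hk, hinv])).elim
    · exact (getElem?_succ_ne_letterInv_of_isReduced hred hk
        (by rw [← hsucc, hl, hinv, letterInv_letterInv])).elim

theorem eq_abs_sub_of_same_pathPrePoint (hR : SmallCancellation (1 / 6) R)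
    (hr : r ∈ hR.symmetrized.words) {k l : Fin r.length} (hk : s - (k : ℕ) ∈ Set.Icc (0 : ℝ) 1)
    (hl : t - (l : ℕ) ∈ Set.Icc (0 : ℝ) 1)
    (hsame : PrePoint.Same (pathPrePoint R g r k s) (pathPrePoint R g r l t) c) :
    c = |s - t| := by
  obtain rfl := eq_of_same_pathPrePoint hR hr hsame
  rw [hsame.eq_abs_off_sub (!r[k].2), pathPrePoint, pathPrePoint, edgePrePoint_off_source _ _ hk,
    edgePrePoint_off_source _ _ hl, sub_sub_sub_cancel_right]

theorem le_via_pathPrePoint (hR : SmallCancellation (1 / 6) R)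
    (hr : r ∈ hR.symmetrized.words) {k l : Fin r.length} (hk : s - (k : ℕ) ∈ Set.Icc (0 : ℝ) 1)
    (hl : t - (l : ℕ) ∈ Set.Icc (0 : ℝ) 1) (i j : Bool) :
    min |s - t| (r.length - |s - t|) ≤
      PrePoint.via (pathPrePoint R g r k s) (pathPrePoint R g r l t) i j := by
  obtain ⟨k', hk', hvert_k, hoff_k⟩ := exists_vert_pathPrePoint_eq (g := g) hk i
  obtain ⟨l', hl', hvert_l, hoff_l⟩ := exists_vert_pathPrePoint_eq (g := g) hl j
  rw [PrePoint.via, hvert_k, hvert_l, hoff_k, hoff_l]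
  have hW := min_abs_le_wordDist_pathVertex hR hr g hk' hl'
  have hst : |s - t| ≤ |s - k'| + |(k' : ℝ) - l'| + |t - l'| := by
    rw [abs_sub_comm t]
    exact (abs_sub_le s l' t).trans (add_le_add_left (abs_sub_le s k' l') _)
  have hkl : |(k' : ℝ) - l'| ≤ |s - k'| + |s - t| + |t - l'| := by
    rw [abs_sub_comm s k']
    exact (abs_sub_le (k' : ℝ) t l').trans (add_le_add_left (abs_sub_le (k' : ℝ) s t) _)
  rcases min_le_iff.1 hW with hW | hW
  · exact (min_le_left _ _).trans (by linarith)
  · exact (min_le_right _ _).trans (by linarith)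

theorem le_dist_edgePath (hR : SmallCancellation (1 / 6) R) (hr : r ∈ hR.symmetrized.words)
    (g : PGroup R) (hs : s ∈ Set.Icc (0 : ℝ) r.length) (ht : t ∈ Set.Icc (0 : ℝ) r.length) :
    min |s - t| (r.length - |s - t|) ≤ dist (edgePath R g r s) (edgePath R g r t) := by
  obtain ⟨k, hk, hks⟩ := exists_edgePath_eq g (hR.symmetrized.ne_nil hr) hs
  obtain ⟨l, hl, hlt⟩ := exists_edgePath_eq g (hR.symmetrized.ne_nil hr) ht
  rw [hks, hlt, SeparationQuotient.dist_mk]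
  rcases PrePoint.pdist_cases (pathPrePoint R g r k s) (pathPrePoint R g r l t)
    with ⟨i, j, hvia⟩ | hsame
  · exact (le_via_pathPrePoint hR hr hk hl i j).trans_eq hvia.symm
  · exact (min_le_left _ _).trans (eq_abs_sub_of_same_pathPrePoint hR hr hk hl hsame).ge

theorem dist_edgePath_le (g : PGroup R) (hr : evalWord R r = 1)
    (hs : s ∈ Set.Icc (0 : ℝ) r.length) (ht : t ∈ Set.Icc (0 : ℝ) r.length) :
    dist (edgePath R g r s) (edgePath R g r t) ≤ min |s - t| (r.length - |s - t|) := by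
  have hlip := fun s t => (lipschitzWith_edgePath g r).dist_le_mul s t
  simp only [NNReal.coe_one, one_mul] at hlip
  refine le_min (hlip s t) ?_
  wlog hst : s ≤ t generalizing s t
  · rw [dist_comm, abs_sub_comm]
    exact this ht hs (le_of_not_ge hst)
  have hclosed : edgePath R g r r.length = edgePath R g r 0 := by
    rw [edgePath_length, hr, mul_one, edgePath_zero]
  calc dist (edgePath R g r s) (edgePath R g r t)
      ≤ dist (edgePath R g r s) (edgePath R g r 0) +
        dist (edgePath R g r r.length) (edgePath R g r t) := hclosed ▸ dist_triangle _ _ _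
    _ ≤ dist s 0 + dist (r.length : ℝ) t := add_le_add (hlip _ _) (hlip _ _)
    _ = r.length - |s - t| := by
      rw [Real.dist_eq, Real.dist_eq, sub_zero, abs_of_nonneg hs.1,
        abs_of_nonneg (sub_nonneg.2 ht.2), abs_sub_comm, abs_of_nonneg (sub_nonneg.2 hst)]
      ring

theorem isIsometricLoop_edgePath (hR : SmallCancellation (1 / 6) R)
    (hr : r ∈ hR.symmetrized.words) (g : PGroup R) :
    IsIsometricLoop r.length (edgePath R g r) := fun _ hs _ ht =>
  le_antisymm (dist_edgePath_le g (evalWord_eq_one_of_mem_symmClosure hr.1) hs ht)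
    (le_dist_edgePath hR hr g hs ht)

end RelatorCycle

theorem stmt6_general {S : Type*} {R : Set (Word S)} (hR : SmallCancellation (1 / 6) R)
    {M : ℝ → ℝ} {N : ℝ} (hN : 1 < N) (hM : 0 ≤ M N) {r w : Word S} (hr : r ∈ R) (hwr : w <:+: r)
    (hw : r.length / N ≤ w.length) {g : PGroup R}
    (hmorse : IsMorseQuasiGeodesicOn M (Set.Icc 0 (w.length : ℝ)) (edgePath R g w)) :
    (r.length : ℝ) ≤ 2 * N / (N - 1) * M N := by
  rcases eq_or_ne w [] with rfl | hne
  · have hle : (r.length : ℝ) ≤ 0 := by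
      rwa [List.length_nil, Nat.cast_zero, div_le_iff₀ (by linarith), zero_mul] at hw
    have := sub_pos.2 hN
    exact hle.trans (by positivity)
  obtain ⟨u, v, rfl⟩ := hwr
  have hrot : u ++ w ++ v ~r w ++ (v ++ u) := by
    rw [List.append_assoc, ← List.append_assoc w]
    exact List.isRotated_append
  have hρ : w ++ (v ++ u) ∈ hR.symmetrized.words :=
    ⟨⟨_, hr, Or.inl hrot⟩, List.append_ne_nil_of_left_ne_nil hne _⟩
  have hloop := isIsometricLoop_edgePath hR hρ g
  rw [← hrot.perm.length_eq] at hloop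
  exact hloop.le_of_isMorseQuasiGeodesicOn (Nat.cast_nonneg _) hN hM hmorse
    (fun t ht => (edgePath_append hne ht.2).symm) hw

end MorseSC

open MorseSC in
/-- In a `C'(1/6)` group, a relator of which an `M`-Morse subword makes up at least the fraction
`1 / N` has length at most `D = (2N / (N - 1)) M(N)`. -/
theorem stmt6 {S : Type*} [Finite S] (R : Set (Word S)) (hR : SmallCancellation (1 / 6) R)
    (M : ℝ → ℝ) (hM : IsMorseGauge M) (N : ℕ) (hN : 2 ≤ N) :
    ∃ D : ℝ, D = 2 * (N : ℝ) / ((N : ℝ) - 1) * M (N : ℝ) ∧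
      ∀ r ∈ R, ∀ w : Word S, w <:+: r → (r.length : ℝ) / (N : ℝ) ≤ (w.length : ℝ) →
        (∃ g : PGroup R,
          IsMorseQuasiGeodesicOn M (Set.Icc 0 (w.length : ℝ)) (edgePath R g w)) →
        (r.length : ℝ) ≤ D := by
  have hN' : (1 : ℝ) < N := by exact_mod_cast hN
  exact ⟨_, rfl, fun r hr w hwr hw ⟨_, hmorse⟩ =>
    stmt6_general hR hN' (hM.2.2 N hN'.le) hr hwr hw hmorse⟩
end

section
/- Terminology. A Morse gauge is a non-decreasing continuous function $M:[1,\infty)\to[0,\infty)$. For $Q\ge 1$, a $Q$-quasi-geodesic in a metric space $X$ is a continuous map $\gamma:I\to X$ on an interval $I\subseteq\mathbb R$ with $\frac{|t-s|}{Q}-Q\le d(\gamma(s),\gamma(t))\le Q|t-s|+Q$ for all $s,t\in I$. A quasi-geodesic $\gamma$ is $M$-Morse if for every $q\ge 1$ and all $s\le t$ in its domain, every $q$-quasi-geodesic with endpoints $\gamma(s)$ and $\gamma(t)$ is contained in the closed $M(q)$-neighbourhood of $\gamma[s,t]$; it is $L$-locally $M$-Morse if every subpath $\gamma[s,t]$ with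 $|t-s|\le L$ is $M$-Morse. Statement. Let $X$ be a geodesic metric space, $M$ a Morse gauge and $Q\ge 1$ a constant. There exists a Morse gauge $M'$ such that for every scale $L'\ge 0$ there exists a scale $L\ge 0$ with the following property: if $\gamma:I\to X$ is a (global) $Q$-quasi-geodesic which is $L$-locally $M$-Morse, and $\gamma':I'\to X$ is a $Q$-quasi-geodesic contained in the closed $Q$-neighbourhood of $\gamma(I)$, then $\gamma'$ is $L'$-locally $M'$-Morse. -/
namespace MorseLTG

/-- A Morse gauge: a non-decreasing continuous function `[1, ∞) → [0, ∞)`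
(only the values on `[1, ∞)` matter). -/
def IsMorseGauge (M : ℝ → ℝ) : Prop :=
  MonotoneOn M (Set.Ici 1) ∧ ContinuousOn M (Set.Ici 1) ∧ ∀ t : ℝ, 1 ≤ t → 0 ≤ M t

section Space

variable {X : Type*} [MetricSpace X]

/-- The restriction of `γ` to `I ⊆ ℝ` is a (continuous) `Q`-quasi-geodesic. -/
def QGeoOn (Q : ℝ) (I : Set ℝ) (γ : ℝ → X) : Prop :=
  ContinuousOn γ I ∧ ∀ s ∈ I, ∀ t ∈ I,
    |t - s| / Q - Q ≤ dist (γ s) (γ t) ∧ dist (γ s) (γ t) ≤ Q * |t - s| + Q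

/-- `γ` is `M`-Morse on `I`: for every `Q ≥ 1` and all `s ≤ t` in `I`, every `Q`-quasi-geodesic
from `γ s` to `γ t` is contained in the closed `M Q`-neighbourhood of `γ[s, t]`. -/
def MorseOn (M : ℝ → ℝ) (I : Set ℝ) (γ : ℝ → X) : Prop :=
  ∀ Q : ℝ, 1 ≤ Q → ∀ s ∈ I, ∀ t ∈ I, s ≤ t →
    ∀ (lam : ℝ → X) (a b : ℝ), a ≤ b → QGeoOn Q (Set.Icc a b) lam →
      lam a = γ s → lam b = γ t →
      lam '' Set.Icc a b ⊆ Metric.cthickening (M Q) (γ '' Set.Icc s t)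

/-- `p` is `L`-locally `M`-Morse on `I`: every subpath `p[s, t]` with `|t - s| ≤ L` is `M`-Morse. -/
def LocMorseOn (M : ℝ → ℝ) (L : ℝ) (I : Set ℝ) (p : ℝ → X) : Prop :=
  ∀ s ∈ I, ∀ t ∈ I, s ≤ t → t - s ≤ L → MorseOn M (Set.Icc s t) p

/-- `γ` is a geodesic on `I` (an isometric embedding). -/
def GeodesicOn (I : Set ℝ) (γ : ℝ → X) : Prop :=
  ∀ s ∈ I, ∀ t ∈ I, dist (γ s) (γ t) = |t - s|

end Space

/-- `X` is a geodesic metric space. -/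
def GeodesicSpace (X : Type*) [MetricSpace X] : Prop :=
  ∀ x y : X, ∃ γ : ℝ → X, γ 0 = x ∧ γ (dist x y) = y ∧
    GeodesicOn (Set.Icc 0 (dist x y)) γ

end MorseLTG

/-!
Let `γ'` be close to `γ`. Given a competitor `lam` with endpoints on `γ'`, prolong both `lam` and
the corresponding segment of `γ'` by short geodesics so that they join two points `γ u`, `γ v`; the
prolonged paths are still quasi-geodesics. Since `γ` is a global quasi-geodesic, `|v - u|` is
bounded in terms of `L'`, so for `L` large the Morse property of `γ[u, v]` applies to both prolonged
paths. Hence `lam` stays near `γ[u, v]`. The segment of `γ'` also stays near `γ[u, v]`, and, being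
connected, it cannot jump over any stretch of it, so conversely `γ[u, v]` stays near `γ'`.
-/

namespace MorseLTG

open Set Metric

lemma IsMorseGauge.add_const_shift {M : ℝ → ℝ} (hM : IsMorseGauge M) {c d : ℝ} (hc : 0 ≤ c)
    (hd : 0 ≤ d) : IsMorseGauge fun q ↦ M (q + c) + d := by
  obtain ⟨hmono, hcont, hnonneg⟩ := hM
  have hshift : MapsTo (· + c) (Ici (1 : ℝ)) (Ici 1) := fun q hq ↦ le_add_of_le_of_nonneg hq hc
  refine ⟨fun p hp q hq hpq ↦ ?_, ?_, fun q hq ↦ add_nonneg (hnonneg _ (hshift hq)) hd⟩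
  · exact add_le_add_left (hmono (hshift hp) (hshift hq) (add_le_add_left hpq c)) d
  · exact (hcont.comp (by fun_prop) hshift).add continuousOn_const

/-- A bound for the distance from a point of a `Q`-quasi-geodesic segment to any connected set which
contains the endpoints of the segment and lies in its `R`-neighbourhood. -/
def connectedFillingBound (Q R : ℝ) : ℝ := Q * (Q * (2 * R + Q)) + Q + R

lemma connectedFillingBound_nonneg {Q R : ℝ} (hQ : 0 ≤ Q) (hR : 0 ≤ R) :
    0 ≤ connectedFillingBound Q R := by
  unfold connectedFillingBound
  positivity

/-- The Morse gauge inherited from `M` by a `Q'`-quasi-geodesic whose endpoints are `C`-close to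
those of an `M`-Morse `Q`-quasi-geodesic. -/
def transferGauge (M : ℝ → ℝ) (Q Q' C : ℝ) : ℝ → ℝ :=
  fun q ↦ M (q + 4 * C) + (connectedFillingBound Q (M (Q' + 4 * C)) + C)

lemma IsMorseGauge.transferGauge {M : ℝ → ℝ} (hM : IsMorseGauge M) {Q Q' C : ℝ} (hQ : 0 ≤ Q)
    (hQ' : 1 ≤ Q') (hC : 0 ≤ C) : IsMorseGauge (transferGauge M Q Q' C) :=
  hM.add_const_shift (by positivity)
    (add_nonneg (connectedFillingBound_nonneg hQ (hM.2.2 _ (by linarith))) hC)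

lemma mem_cthickening_image_iff {α X : Type*} [TopologicalSpace α] [PseudoMetricSpace X]
    {K : Set α} (hK : IsCompact K) {f : α → X} (hf : ContinuousOn f K) {R : ℝ} (hR : 0 ≤ R)
    {x : X} : x ∈ cthickening R (f '' K) ↔ ∃ w ∈ K, dist x (f w) ≤ R := by
  simp only [(hK.image_of_continuousOn hf).cthickening_eq_biUnion_closedBall hR, mem_iUnion,
    mem_closedBall, exists_mem_image, exists_prop]

lemma exists_dist_lt_of_mem_cthickening_image {α X : Type*} [PseudoMetricSpace X] {K : Set α}
    {f : α → X} {δ ε : ℝ} (hε : 0 < ε) (hδε : δ < ε) {x : X} (hx : x ∈ cthickening δ (f '' K)) :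
    ∃ w ∈ K, dist x (f w) < ε := by
  obtain ⟨_, ⟨w, hw, rfl⟩, hlt⟩ := mem_thickening_iff.1
    (cthickening_subset_thickening' hε hδε _ hx)
  exact ⟨w, hw, hlt⟩

lemma exists_continuous_glue {X : Type*} [TopologicalSpace X] {f g : ℝ → X} {b : ℝ}
    (hf : Continuous f) (hg : Continuous g) (hfg : f b = g b) :
    ∃ k : ℝ → X, Continuous k ∧ EqOn k f (Iic b) ∧ EqOn k g (Ici b) := by
  refine ⟨fun t ↦ if t ≤ b then f t else g t,
    hf.if_le hg continuous_id continuous_const fun t ht ↦ ht ▸ hfg, fun t ht ↦ if_pos ht, ?_⟩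
  intro t ht
  rcases (mem_Ici.1 ht).eq_or_lt with rfl | hlt
  · exact (if_pos le_rfl).trans hfg
  · exact if_neg hlt.not_ge

lemma abs_sub_projIcc_le {a b c t : ℝ} (hab : a ≤ b) (hc : 0 ≤ c)
    (ht : t ∈ Icc (a - c) (b + c)) : |t - projIcc a b hab t| ≤ c := by
  rcases le_total t a with hta | hat
  · rw [projIcc_of_le_left hab hta, abs_sub_comm, abs_of_nonneg (sub_nonneg.2 hta)]
    linarith [ht.1]
  rcases le_total t b with htb | hbt
  · rwa [projIcc_of_mem hab ⟨hat, htb⟩, sub_self, abs_zero]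
  · rw [projIcc_of_right_le hab hbt, abs_of_nonneg (sub_nonneg.2 hbt)]
    linarith [ht.2]

section Space

variable {X : Type*} [MetricSpace X]

namespace QGeoOn

variable {Q Q' C D R : ℝ} {I J : Set ℝ} {γ γ' : ℝ → X} {s t u v x : ℝ}

lemma mono (h : QGeoOn Q I γ) (hJ : J ⊆ I) : QGeoOn Q J γ :=
  ⟨h.1.mono hJ, fun s hs t ht ↦ h.2 s (hJ hs) t (hJ ht)⟩

lemma comp_neg {a b : ℝ} (h : QGeoOn Q (Icc a b) γ) :
    QGeoOn Q (Icc (-b) (-a)) fun t ↦ γ (-t) := by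
  have hmem : MapsTo (- · : ℝ → ℝ) (Icc (-b) (-a)) (Icc a b) :=
    fun t ht ↦ ⟨le_neg_of_le_neg ht.2, neg_le_of_neg_le ht.1⟩
  refine ⟨h.1.comp continuous_neg.continuousOn hmem, fun s hs t ht ↦ ?_⟩
  simpa only [neg_sub_neg, abs_sub_comm s t] using h.2 (-s) (hmem hs) (-t) (hmem ht)

lemma abs_sub_le (hQ : 1 ≤ Q) (h : QGeoOn Q I γ) (hs : s ∈ I) (ht : t ∈ I)
    (hD : dist (γ s) (γ t) ≤ D) : |t - s| ≤ Q * (D + Q) := by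
  rw [← div_le_iff₀' (by linarith)]
  linarith [(h.2 s hs t ht).1]

lemma abs_sub_le_of_endpoints_close (hQ : 1 ≤ Q) (hγ : QGeoOn Q I γ) (hγ' : QGeoOn Q' J γ')
    (hu : u ∈ I) (hv : v ∈ I) (hs : s ∈ J) (ht : t ∈ J) (hsu : dist (γ' s) (γ u) ≤ C)
    (htv : dist (γ' t) (γ v) ≤ C) : |v - u| ≤ Q * (Q' * |t - s| + Q' + 2 * C + Q) := by
  refine hγ.abs_sub_le hQ hu hv ?_
  calc dist (γ u) (γ v)
      ≤ dist (γ u) (γ' s) + dist (γ' s) (γ' t) + dist (γ' t) (γ v) := dist_triangle4 ..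
    _ ≤ C + (Q' * |t - s| + Q') + C := by
      gcongr
      · rwa [dist_comm]
      · exact (hγ'.2 s hs t ht).2
    _ = Q' * |t - s| + Q' + 2 * C := by ring

lemma dist_left_le (hQ : 1 ≤ Q) (h : QGeoOn Q (Icc s t) γ) (hx : x ∈ Icc s t)
    (hD : dist (γ s) (γ t) ≤ D) : dist (γ x) (γ s) ≤ Q * (Q * (D + Q)) + Q := by
  have hst : s ≤ t := hx.1.trans hx.2
  have hlen : |s - x| ≤ Q * (D + Q) := calc
    |s - x| ≤ |t - s| := by
      rw [abs_sub_comm, abs_of_nonneg (sub_nonneg.2 hx.1), abs_of_nonneg (sub_nonneg.2 hst)]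
      linarith [hx.2]
    _ ≤ Q * (D + Q) := h.abs_sub_le hQ (left_mem_Icc.2 hst) (right_mem_Icc.2 hst) hD
  exact (h.2 x hx s (left_mem_Icc.2 hst)).2.trans (by gcongr)

lemma image_subset_cthickening_of_isPreconnected (hQ : 1 ≤ Q) (h : QGeoOn Q (uIcc u v) γ)
    (hR : 0 ≤ R) {S : Set X} (hS : IsPreconnected S) (hu : γ u ∈ S) (hv : γ v ∈ S)
    (hsub : S ⊆ cthickening R (γ '' uIcc u v)) :
    γ '' uIcc u v ⊆ cthickening (connectedFillingBound Q R) S := by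
  wlog huv : u ≤ v generalizing u v
  · rw [uIcc_comm] at h hsub ⊢
    exact this h hv hu hsub (le_of_not_ge huv)
  rw [uIcc_of_le huv] at h hsub ⊢
  rintro _ ⟨x, hx, rfl⟩
  have hl : Icc u x ⊆ Icc u v := Icc_subset_Icc_right hx.2
  have hr : Icc x v ⊆ Icc u v := Icc_subset_Icc_left hx.1
  -- The neighbourhoods of the two halves of the segment are closed and cover `S`, so they meet in
  -- `S`; the two halves are therefore `2R`-close to each other across `γ x`.
  have hcover : S ⊆ cthickening R (γ '' Icc u x) ∪ cthickening R (γ '' Icc x v) := by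
    rwa [← cthickening_union, ← image_union, Icc_union_Icc_eq_Icc hx.1 hx.2]
  obtain ⟨p, hpS, hpl, hpr⟩ := isPreconnected_closed_iff.1 hS _ _ isClosed_cthickening
    isClosed_cthickening hcover
    ⟨γ u, hu, self_subset_cthickening _ (mem_image_of_mem γ (left_mem_Icc.2 hx.1))⟩
    ⟨γ v, hv, self_subset_cthickening _ (mem_image_of_mem γ (right_mem_Icc.2 hx.2))⟩
  obtain ⟨w₁, hw₁, hd₁⟩ := (mem_cthickening_image_iff isCompact_Icc (h.1.mono hl) hR).1 hpl
  obtain ⟨w₂, hw₂, hd₂⟩ := (mem_cthickening_image_iff isCompact_Icc (h.1.mono hr) hR).1 hpr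
  have hw : dist (γ w₁) (γ w₂) ≤ 2 * R := by linarith [dist_triangle_left (γ w₁) (γ w₂) p]
  have hxw₁ : dist (γ x) (γ w₁) ≤ Q * (Q * (2 * R + Q)) + Q :=
    (h.mono (Icc_subset_Icc hw₁.1 hw₂.2)).dist_left_le hQ ⟨hw₁.2, hw₂.1⟩ hw
  refine mem_cthickening_of_dist_le _ p _ _ hpS ?_
  calc dist (γ x) p ≤ dist (γ x) (γ w₁) + dist p (γ w₁) := dist_triangle_right ..
    _ ≤ connectedFillingBound Q R := add_le_add hxw₁ hd₁

lemma of_dist_comp_le {q : ℝ} (hq : 1 ≤ q) {lam mu : ℝ → X} (h : QGeoOn q I lam)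
    (hmu : ContinuousOn mu J) {r : ℝ → ℝ} (hrI : MapsTo r J I)
    (hr : ∀ s ∈ J, ∀ t ∈ J, |r t - r s| ≤ |t - s|) (hrC : ∀ t ∈ J, |t - r t| ≤ C)
    (hd : ∀ t ∈ J, dist (mu t) (lam (r t)) ≤ C) : QGeoOn (q + 4 * C) J mu := by
  refine ⟨hmu, fun s hs t ht ↦ ?_⟩
  have hC : 0 ≤ C := dist_nonneg.trans (hd s hs)
  obtain ⟨hlower, hupper⟩ := h.2 _ (hrI hs) _ (hrI ht)
  have hds := hd s hs
  have hdt := hd t ht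
  constructor
  · have hts : |t - s| ≤ |r t - r s| + 2 * C := by
      have htri : |t - s| ≤ |t - r t| + |r t - r s| + |r s - s| := by
        simpa only [Real.dist_eq] using dist_triangle4 t (r t) (r s) s
      rw [abs_sub_comm (r s)] at htri
      linarith [hrC s hs, hrC t ht]
    calc |t - s| / (q + 4 * C) - (q + 4 * C)
        ≤ |t - s| / q - (q + 4 * C) := by gcongr; linarith
      _ ≤ (|r t - r s| + 2 * C) / q - (q + 4 * C) := by gcongr
      _ = |r t - r s| / q - q + 2 * C / q - 4 * C := by ring
      _ ≤ dist (lam (r s)) (lam (r t)) + 2 * C - 4 * C := by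
        gcongr
        exact div_le_self (by positivity) hq
      _ ≤ dist (mu s) (mu t) := by
        have htri := dist_triangle4 (lam (r s)) (mu s) (mu t) (lam (r t))
        rw [dist_comm (lam (r s)) (mu s)] at htri
        linarith
  · calc dist (mu s) (mu t)
        ≤ dist (mu s) (lam (r s)) + dist (lam (r s)) (lam (r t)) + dist (lam (r t)) (mu t) :=
          dist_triangle4 ..
      _ ≤ C + (q * |r t - r s| + q) + C := by
        gcongr
        rwa [dist_comm]
      _ ≤ C + (q * |t - s| + q) + C := by
        linarith [mul_le_mul_of_nonneg_left (hr s hs t ht) (by linarith : 0 ≤ q)]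
      _ ≤ (q + 4 * C) * |t - s| + (q + 4 * C) := by nlinarith [abs_nonneg (t - s)]

end QGeoOn

lemma GeodesicOn.continuousOn {I : Set ℝ} {γ : ℝ → X} (h : GeodesicOn I γ) :
    ContinuousOn γ I :=
  (LipschitzOnWith.of_dist_le_mul (K := 1) fun s hs t ht ↦ by
    rw [h s hs t ht, NNReal.coe_one, one_mul, dist_comm, Real.dist_eq]).continuousOn

lemma GeodesicSpace.exists_continuous_dist_le (hX : GeodesicSpace X) {x y : X} {C : ℝ}
    (hC : dist x y ≤ C) :
    ∃ g : ℝ → X, Continuous g ∧ g 0 = x ∧ g C = y ∧ ∀ t, dist (g t) x ≤ C := by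
  obtain ⟨g, hg0, hg1, hg⟩ := hX x y
  have hd : 0 ≤ dist x y := dist_nonneg
  let p : ℝ → Icc 0 (dist x y) := projIcc 0 (dist x y) hd
  refine ⟨fun t ↦ g (p t), hg.continuousOn.comp_continuous
    (continuous_subtype_val.comp continuous_projIcc) fun t ↦ (p t).2, ?_, ?_, fun t ↦ ?_⟩
  · simp only [p, projIcc_left, hg0]
  · simp only [p, projIcc_of_right_le hd hC, hg1]
  · calc dist (g (p t)) x = |0 - (p t : ℝ)| := by
          rw [← hg _ (p t).2 0 (left_mem_Icc.2 hd), hg0]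
      _ = p t := by rw [zero_sub, abs_neg, abs_of_nonneg (p t).2.1]
      _ ≤ C := (p t).2.2.trans hC

lemma GeodesicSpace.exists_continuous_extension (hX : GeodesicSpace X) {C a b : ℝ} (hab : a ≤ b)
    {lam : ℝ → X} (hlam : ContinuousOn lam (Icc a b)) {x y : X} (hx : dist (lam a) x ≤ C)
    (hy : dist (lam b) y ≤ C) :
    ∃ mu : ℝ → X, Continuous mu ∧ EqOn mu lam (Icc a b) ∧ mu (a - C) = x ∧ mu (b + C) = y ∧
      ∀ t, dist (mu t) (lam (projIcc a b hab t)) ≤ C := by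
  have hC : 0 ≤ C := dist_nonneg.trans hx
  obtain ⟨g₁, hg₁, hg₁0, hg₁C, hg₁d⟩ := hX.exists_continuous_dist_le hx
  obtain ⟨g₂, hg₂, hg₂0, hg₂C, hg₂d⟩ := hX.exists_continuous_dist_le hy
  have hcore : Continuous fun t ↦ lam (projIcc a b hab t) :=
    hlam.comp_continuous (continuous_subtype_val.comp continuous_projIcc)
      fun t ↦ (projIcc a b hab t).2
  obtain ⟨tail, htail, htail_le, htail_ge⟩ := exists_continuous_glue (b := b) hcore
    (g := fun t ↦ g₂ (t - b)) (by fun_prop) (by simp only [projIcc_right, sub_self, hg₂0])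
  obtain ⟨mu, hmu, hmu_le, hmu_ge⟩ := exists_continuous_glue (b := a)
    (f := fun t ↦ g₁ (a - t)) (by fun_prop) htail
    (by simp only [htail_le hab, projIcc_left, sub_self, hg₁0])
  have hmu_left : ∀ t ≤ a, mu t = g₁ (a - t) := fun t ht ↦ hmu_le ht
  have hmu_mid : EqOn mu lam (Icc a b) := fun t ht ↦ by
    simp only [hmu_ge ht.1, htail_le ht.2, projIcc_of_mem hab ht]
  have hmu_right : ∀ t ≥ b, mu t = g₂ (t - b) := fun t ht ↦
    (hmu_ge (hab.trans ht)).trans (htail_ge ht)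
  refine ⟨mu, hmu, hmu_mid, ?_, ?_, fun t ↦ ?_⟩
  · rw [hmu_left _ (sub_le_self a hC), sub_sub_cancel, hg₁C]
  · rw [hmu_right _ (le_add_of_nonneg_right hC), add_sub_cancel_left, hg₂C]
  · rcases le_total t a with hta | hat
    · rw [hmu_left t hta, projIcc_of_le_left hab hta]
      exact hg₁d _
    rcases le_total t b with htb | hbt
    · rwa [projIcc_of_mem hab ⟨hat, htb⟩, hmu_mid ⟨hat, htb⟩, dist_self]
    · rw [hmu_right t hbt, projIcc_of_right_le hab hbt]
      exact hg₂d _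

lemma QGeoOn.exists_extension (hX : GeodesicSpace X) {q C a b : ℝ} (hq : 1 ≤ q) (hab : a ≤ b)
    {lam : ℝ → X} (h : QGeoOn q (Icc a b) lam) {x y : X} (hx : dist (lam a) x ≤ C)
    (hy : dist (lam b) y ≤ C) :
    ∃ mu : ℝ → X, QGeoOn (q + 4 * C) (Icc (a - C) (b + C)) mu ∧ EqOn mu lam (Icc a b) ∧
      mu (a - C) = x ∧ mu (b + C) = y ∧ range mu ⊆ cthickening C (lam '' Icc a b) := by
  obtain ⟨mu, hmu, hmu_eq, hmu_left, hmu_right, hmu_dist⟩ :=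
    hX.exists_continuous_extension hab h.1 hx hy
  refine ⟨mu, ?_, hmu_eq, hmu_left, hmu_right, ?_⟩
  · exact h.of_dist_comp_le hq hmu.continuousOn (r := fun t ↦ projIcc a b hab t)
      (fun t _ ↦ (projIcc a b hab t).2) (fun s _ t _ ↦ abs_projIcc_sub_projIcc hab)
      (fun t ht ↦ abs_sub_projIcc_le hab (dist_nonneg.trans hx) ht) (fun t _ ↦ hmu_dist t)
  · rintro _ ⟨t, rfl⟩
    exact mem_cthickening_of_dist_le _ _ _ _ (mem_image_of_mem lam (projIcc a b hab t).2)
      (hmu_dist t)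

lemma LocMorseOn.morseOn_uIcc {M : ℝ → ℝ} {L : ℝ} {I : Set ℝ} {γ : ℝ → X}
    (h : LocMorseOn M L I γ) {u v : ℝ} (hu : u ∈ I) (hv : v ∈ I) (huv : |v - u| ≤ L) :
    MorseOn M (uIcc u v) γ := by
  wlog hle : u ≤ v generalizing u v
  · rw [uIcc_comm]
    exact this hv hu (by rwa [abs_sub_comm]) (le_of_not_ge hle)
  rw [uIcc_of_le hle]
  exact h u hu v hv hle ((le_abs_self _).trans huv)

namespace MorseOn

variable {M : ℝ → ℝ} {q Q Q' C a b s t u v : ℝ} {I : Set ℝ} {γ γ' lam : ℝ → X}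

lemma image_subset_uIcc (h : MorseOn M I γ) (hq : 1 ≤ q) (hu : u ∈ I) (hv : v ∈ I) (hab : a ≤ b)
    (hlam : QGeoOn q (Icc a b) lam) (ha : lam a = γ u) (hb : lam b = γ v) :
    lam '' Icc a b ⊆ cthickening (M q) (γ '' uIcc u v) := by
  rcases le_total u v with hle | hle
  · rw [uIcc_of_le hle]
    exact h q hq u hu v hv hle lam a b hab hlam ha hb
  · have hrev := h q hq v hv u hu hle _ (-b) (-a) (neg_le_neg hab) hlam.comp_neg
      (by rwa [neg_neg]) (by rwa [neg_neg])
    rw [uIcc_of_ge hle]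
    rwa [← image_image lam, image_neg_Icc, neg_neg, neg_neg] at hrev

lemma image_subset_of_endpoints_close (hX : GeodesicSpace X) (h : MorseOn M I γ) (hq : 1 ≤ q)
    (hu : u ∈ I) (hv : v ∈ I) (hab : a ≤ b) (hlam : QGeoOn q (Icc a b) lam)
    (ha : dist (lam a) (γ u) ≤ C) (hb : dist (lam b) (γ v) ≤ C) :
    lam '' Icc a b ⊆ cthickening (M (q + 4 * C)) (γ '' uIcc u v) := by
  have hC : 0 ≤ C := dist_nonneg.trans ha
  obtain ⟨mu, hmu, hmu_eq, hmu_left, hmu_right, -⟩ := hlam.exists_extension hX hq hab ha hb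
  rw [← hmu_eq.image_eq]
  exact (image_mono (Icc_subset_Icc (by linarith) (by linarith))).trans
    (h.image_subset_uIcc (by linarith) hu hv (by linarith) hmu hmu_left hmu_right)

lemma image_uIcc_subset_of_endpoints_close (hX : GeodesicSpace X) (hM : IsMorseGauge M)
    (h : MorseOn M (uIcc u v) γ) (hQ : 1 ≤ Q) (hγ : QGeoOn Q (uIcc u v) γ) (hq : 1 ≤ q)
    (hab : a ≤ b) (hlam : QGeoOn q (Icc a b) lam) (ha : dist (lam a) (γ u) ≤ C)
    (hb : dist (lam b) (γ v) ≤ C) :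
    γ '' uIcc u v ⊆
      cthickening (connectedFillingBound Q (M (q + 4 * C)) + C) (lam '' Icc a b) := by
  have hC : 0 ≤ C := dist_nonneg.trans ha
  have hR : 0 ≤ M (q + 4 * C) := hM.2.2 _ (by linarith)
  obtain ⟨mu, hmu, -, hmu_left, hmu_right, hmu_lam⟩ := hlam.exists_extension hX hq hab ha hb
  have hCab : a - C ≤ b + C := by linarith
  have hmu_γ : mu '' Icc (a - C) (b + C) ⊆ cthickening (M (q + 4 * C)) (γ '' uIcc u v) :=
    h.image_subset_uIcc (by linarith) left_mem_uIcc right_mem_uIcc hCab hmu hmu_left hmu_right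
  calc γ '' uIcc u v
      ⊆ cthickening (connectedFillingBound Q (M (q + 4 * C))) (mu '' Icc (a - C) (b + C)) :=
        hγ.image_subset_cthickening_of_isPreconnected hQ hR (isPreconnected_Icc.image mu hmu.1)
          ⟨a - C, left_mem_Icc.2 hCab, hmu_left⟩ ⟨b + C, right_mem_Icc.2 hCab, hmu_right⟩ hmu_γ
    _ ⊆ cthickening (connectedFillingBound Q (M (q + 4 * C))) (cthickening C (lam '' Icc a b)) :=
        cthickening_subset_of_subset _ ((image_subset_range mu _).trans hmu_lam)
    _ ⊆ _ := cthickening_cthickening_subset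
        (connectedFillingBound_nonneg (by linarith) hR) hC _

lemma image_subset_cthickening_transferGauge (hX : GeodesicSpace X) (hM : IsMorseGauge M)
    (h : MorseOn M (uIcc u v) γ) (hQ : 1 ≤ Q) (hγ : QGeoOn Q (uIcc u v) γ) (hQ' : 1 ≤ Q')
    (hst : s ≤ t) (hγ' : QGeoOn Q' (Icc s t) γ') (hsu : dist (γ' s) (γ u) ≤ C)
    (htv : dist (γ' t) (γ v) ≤ C) (hq : 1 ≤ q) (hab : a ≤ b) (hlam : QGeoOn q (Icc a b) lam)
    (ha : lam a = γ' s) (hb : lam b = γ' t) :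
    lam '' Icc a b ⊆ cthickening (transferGauge M Q Q' C q) (γ' '' Icc s t) := by
  have hC : 0 ≤ C := dist_nonneg.trans hsu
  calc lam '' Icc a b
      ⊆ cthickening (M (q + 4 * C)) (γ '' uIcc u v) :=
        h.image_subset_of_endpoints_close hX hq left_mem_uIcc right_mem_uIcc hab hlam
          (by rwa [ha]) (by rwa [hb])
    _ ⊆ cthickening (M (q + 4 * C))
          (cthickening (connectedFillingBound Q (M (Q' + 4 * C)) + C) (γ' '' Icc s t)) :=
        cthickening_subset_of_subset _
          (h.image_uIcc_subset_of_endpoints_close hX hM hQ hγ hQ' hst hγ' hsu htv)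
    _ ⊆ cthickening (transferGauge M Q Q' C q) (γ' '' Icc s t) :=
        cthickening_cthickening_subset (hM.2.2 _ (by linarith))
          (add_nonneg (connectedFillingBound_nonneg (by linarith) (hM.2.2 _ (by linarith))) hC) _

end MorseOn

end Space

end MorseLTG

theorem stmt8 {X : Type*} [MetricSpace X] (hX : MorseLTG.GeodesicSpace X)
    (M : ℝ → ℝ) (hM : MorseLTG.IsMorseGauge M) (Q : ℝ) (hQ : 1 ≤ Q) :
    ∃ M' : ℝ → ℝ, MorseLTG.IsMorseGauge M' ∧
      ∀ L' : ℝ, 0 ≤ L' → ∃ L : ℝ, 0 ≤ L ∧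
        ∀ (I I' : Set ℝ), I.OrdConnected → I'.OrdConnected →
          ∀ γ γ' : ℝ → X,
            MorseLTG.QGeoOn Q I γ → MorseLTG.LocMorseOn M L I γ →
            MorseLTG.QGeoOn Q I' γ' → γ' '' I' ⊆ Metric.cthickening Q (γ '' I) →
            MorseLTG.LocMorseOn M' L' I' γ' := by
  have hQ0 : 0 ≤ Q := by linarith
  refine ⟨MorseLTG.transferGauge M Q Q (Q + 1), hM.transferGauge hQ0 hQ (by linarith), fun L' hL' ↦
    ⟨Q * (Q * L' + Q + 2 * (Q + 1) + Q), by positivity, ?_⟩⟩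
  intro I I' hI hI' γ γ' hγ hloc hγ' hsub s₀ hs₀ t₀ ht₀ _ hL q hq s hs t ht hst lam a b hab
    hlam ha hb
  have hs' : s ∈ I' := hI'.out hs₀ ht₀ hs
  have ht' : t ∈ I' := hI'.out hs₀ ht₀ ht
  have hnear : ∀ r ∈ I', ∃ u ∈ I, dist (γ' r) (γ u) < Q + 1 := fun r hr ↦
    MorseLTG.exists_dist_lt_of_mem_cthickening_image (by linarith) (lt_add_one Q)
      (hsub (Set.mem_image_of_mem γ' hr))
  obtain ⟨u, hu, hsu⟩ := hnear s hs'
  obtain ⟨v, hv, htv⟩ := hnear t ht'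
  have hts : |t - s| ≤ L' := by
    rw [abs_of_nonneg (sub_nonneg.2 hst)]
    linarith [hs.1, ht.2]
  have huv : |v - u| ≤ Q * (Q * L' + Q + 2 * (Q + 1) + Q) :=
    (hγ.abs_sub_le_of_endpoints_close hQ hγ' hu hv hs' ht' hsu.le htv.le).trans (by gcongr)
  exact (hloc.morseOn_uIcc hu hv huv).image_subset_cthickening_transferGauge hX hM hQ
    (hγ.mono (hI.uIcc_subset hu hv)) hQ hst (hγ'.mono (hI'.out hs' ht')) hsu.le htv.le hq
    hab hlam ha hb
end

section
/- A geodesic in a metric space $X$ is an isometric embedding $\gamma\colon I\to X$ of a closed (bounded or unbounded) interval $I\subseteq\mathbb{R}$; its image is also denoted $\gamma$. For points $p=\gamma(s)$ and $q=\gamma(t)$ on $\gamma$, $[p,q]_\gamma$ denotes the image under $\gamma$ of the closed interval between $s$ and $t$. A closest-point projection of $x\in X$ onto $\gamma$ is a point $x'\in\gamma$ with $d(x,x')=d(x,\gamma)$; let $\pi_\gamma(x)$ be the set of these points. For $C\ge 0$, a geodesic $\gamma$ is $C$-contracting if for every $x\in X$ the set $\bigcup\{\pi_\gamma(z) : z\in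 X,\ d(x,z)<d(x,\gamma)\}$ has diameter at most $C$. Let $C\ge 0$ be a constant. There exists a constant $C'$, depending only on $C$, such that the following holds in every proper geodesic metric space $X$. Let $\gamma$ be a $C$-contracting geodesic in $X$, let $x,y\in X$, and let $x'$ and $y'$ be closest-point projections of $x$ and $y$, respectively, onto $\gamma$ with $d(x',y')\ge C'$. Then for every geodesic $\eta$ from $x$ to $y$ there exist points $u,v$ on $\eta$ such that the Hausdorff distance between $[u,v]_\eta$ and $[x',y']_\gamma$ is at most $C'$ and, moreover, every point $w$ on $\eta$ which lies in the closed $C$-neighbourhood of $[x',y']_\gamma$ belongs to $[u,v]_\eta$. -/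
/-- `γ` restricted to `I` is an isometric embedding of `I ⊆ ℝ`. -/
def GeodesicOn {X : Type*} [MetricSpace X] (I : Set ℝ) (γ : ℝ → X) : Prop :=
  ∀ s ∈ I, ∀ t ∈ I, dist (γ s) (γ t) = |t - s|

/-- `X` is a geodesic metric space: any two points are joined by a geodesic. -/
def GeodesicSpace (X : Type*) [MetricSpace X] : Prop :=
  ∀ x y : X, ∃ γ : ℝ → X, γ 0 = x ∧ γ (dist x y) = y ∧
    GeodesicOn (Set.Icc 0 (dist x y)) γ

/-- The set of closest-point projections of `x` to `A`. -/
def projSet {X : Type*} [MetricSpace X] (A : Set X) (x : X) : Set X :=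
  {y ∈ A | ∀ z ∈ A, dist x y ≤ dist x z}

/-- `A` is `C`-contracting: for every `x`, the projection to `A` of the open ball of radius
`d(x, A)` around `x` has (extended) diameter at most `C`. -/
def ContractingSet {X : Type*} [MetricSpace X] (C : ℝ) (A : Set X) : Prop :=
  ∀ x : X, Metric.ediam (⋃ y ∈ Metric.ball x (Metric.infDist x A), projSet A y) ≤
    ENNReal.ofReal C

/-- `γ`, with domain `I`, is a `C`-contracting geodesic: `I` is a closed interval (bounded or
not), `γ` is an isometric embedding on `I`, and its image is `C`-contracting. -/
structure IsContractingGeodesic {X : Type*} [MetricSpace X] (C : ℝ) (I : Set ℝ) (γ : ℝ → X) :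
    Prop where
  ordConnected : I.OrdConnected
  isClosed : IsClosed I
  geodesic : GeodesicOn I γ
  contracting : ContractingSet C (γ '' I)

/-!
Fix `R > 2 * C` and consider a geodesic that stays at distance at least `R` from a `C`-contracting
set. A first and a last piece of it, whose lengths are essentially the distances of its endpoints to
the set, have projections of diameter at most `C`. Since a geodesic is no longer than the detour
through the projections of its endpoints, what remains is at most `R` longer than the distance `d`
between these projections. Subdividing it into pieces of length less than `R`, each of which moves
the projection by at most `C`, gives `d ≤ d / 2 + O(R)`, hence `d = O(R)`.

So if `d(x', y')` is large, then `η` comes `R`-close to `γ`; the points `u`, `v` are the first and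
the last at which it does. The same estimate, applied to the parts of `η` outside of `[u, v]`, shows
that `u` is near `x'` and `v` is near `y'`; applied to the excursions of `η` between `u` and `v`, it
shows that these remain near `γ`. A geodesic that remains near another one, with endpoints near two
of its points, is close to the segment between these points at equal times.
-/

open Metric Set

section Sublevel

variable {α β : Type*} [LinearOrder α] [TopologicalSpace α] [OrderTopology α] [DenselyOrdered α]
  [LinearOrder β] [TopologicalSpace β] [OrderClosedTopology β] {f : α → β} {a b e : α} {c : β}

lemma le_on_Icc_of_isLeast_sublevel (hf : ContinuousOn f (Icc a b))
    (he : IsLeast {r ∈ Icc a b | f r ≤ c} e) (hae : a < e) : ∀ r ∈ Icc a e, c ≤ f r := by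
  have hle : ∀ r ∈ Ico a e, c ≤ f r := fun r hr =>
    le_of_not_ge fun h => hr.2.not_ge (he.2 ⟨⟨hr.1, hr.2.le.trans he.1.1.2⟩, h⟩)
  rw [← closure_Ico hae.ne]
  refine le_on_closure hle continuousOn_const (hf.mono ?_)
  rw [closure_Ico hae.ne]
  exact Icc_subset_Icc_right he.1.1.2

lemma le_on_Icc_of_isGreatest_sublevel (hf : ContinuousOn f (Icc a b))
    (he : IsGreatest {r ∈ Icc a b | f r ≤ c} e) (heb : e < b) : ∀ r ∈ Icc e b, c ≤ f r := by
  have hle : ∀ r ∈ Ioc e b, c ≤ f r := fun r hr =>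
    le_of_not_ge fun h => hr.1.not_ge (he.2 ⟨⟨he.1.1.1.trans hr.1.le, hr.2⟩, h⟩)
  rw [← closure_Ioc heb.ne]
  refine le_on_closure hle continuousOn_const (hf.mono ?_)
  rw [closure_Ioc heb.ne]
  exact Icc_subset_Icc_left he.1.1.1

end Sublevel

lemma dist_le_div_add_one_mul_of_sub_lt {Y : Type*} [PseudoMetricSpace Y] {f : ℝ → Y}
    {p q R C : ℝ} (hpq : p ≤ q) (hR : 0 < R)
    (hf : ∀ r ∈ Icc p q, ∀ r' ∈ Icc r q, r' - r < R → dist (f r) (f r') ≤ C) :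
    dist (f p) (f q) ≤ ((q - p) / R + 1) * C := by
  have hC : 0 ≤ C := dist_nonneg.trans <|
    hf p (left_mem_Icc.2 hpq) p (left_mem_Icc.2 hpq) (by rwa [sub_self])
  set n := ⌊(q - p) / R⌋₊
  set δ := (q - p) / (n + 1)
  have hδ : 0 ≤ δ := div_nonneg (sub_nonneg.2 hpq) (by positivity)
  have hδn : (n + 1) * δ = q - p := mul_div_cancel₀ _ (by positivity)
  have hδR : δ < R := by
    rw [div_lt_comm₀ (by positivity) hR]
    exact Nat.lt_floor_add_one _
  have hstep : ∀ k < n + 1, dist (f (p + k * δ)) (f (p + (k + 1 : ℕ) * δ)) ≤ C := by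
    intro k hk
    have hkn : ((k + 1 : ℕ) : ℝ) * δ ≤ q - p := by
      rw [← hδn]
      gcongr
      exact_mod_cast hk
    have hk0 : 0 ≤ k * δ := by positivity
    push_cast at hkn ⊢
    exact hf _ ⟨by linarith, by linarith⟩ _ ⟨by linarith, by linarith⟩ (by linarith)
  have hsum := dist_le_range_sum_of_dist_le (f := fun k : ℕ => f (p + k * δ)) (n + 1)
    (d := fun _ => C) (hstep _)
  simp only [Finset.sum_const, Finset.card_range, nsmul_eq_mul, Nat.cast_zero, zero_mul, add_zero,
    Nat.cast_add, Nat.cast_one, hδn, add_sub_cancel] at hsum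
  refine hsum.trans (mul_le_mul_of_nonneg_right ?_ hC)
  gcongr
  exact Nat.floor_le (div_nonneg (sub_nonneg.2 hpq) hR.le)

section MetricSpace

variable {X : Type*} [MetricSpace X]

section Projections

variable {A : Set X} {C : ℝ} {x y x' y' : X}

/-- `A` is proximinal: every point of the space has a closest-point projection to `A`. It
provides the projections of the intermediate points of a geodesic. -/
def IsProximinal (A : Set X) : Prop :=
  ∀ x, (projSet A x).Nonempty

lemma infDist_eq_dist_of_mem_projSet (hx' : x' ∈ projSet A x) : infDist x A = dist x x' :=
  le_antisymm (infDist_le_dist_of_mem hx'.1) ((le_infDist ⟨x', hx'.1⟩).2 fun _ hz => hx'.2 _ hz)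

lemma dist_le_infDist_add_infDist_add_dist (hx' : x' ∈ projSet A x) (hy' : y' ∈ projSet A y) :
    dist x y ≤ infDist x A + infDist y A + dist x' y' := by
  rw [infDist_eq_dist_of_mem_projSet hx', infDist_eq_dist_of_mem_projSet hy']
  linarith [dist_triangle4 x x' y' y, dist_comm y y']

lemma infDist_le_of_mem_cthickening (hC : 0 ≤ C) (hx : x ∈ cthickening C A) : infDist x A ≤ C :=
  ENNReal.toReal_le_of_le_ofReal hC hx

lemma ContractingSet.dist_le (h : ContractingSet C A) (hC : 0 ≤ C)
    (hxy : dist x y < infDist x A) (hx' : x' ∈ projSet A x) (hy' : y' ∈ projSet A y) :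
    dist x' y' ≤ C := by
  have hx'_mem : x' ∈ ⋃ z ∈ ball x (infDist x A), projSet A z :=
    mem_biUnion (mem_ball_self (dist_nonneg.trans_lt hxy)) hx'
  have hy'_mem : y' ∈ ⋃ z ∈ ball x (infDist x A), projSet A z := mem_biUnion (mem_ball'.2 hxy) hy'
  have := (edist_le_ediam_of_mem hx'_mem hy'_mem).trans (h x)
  rwa [edist_dist, ENNReal.ofReal_le_ofReal_iff hC] at this

end Projections

namespace GeodesicOn

variable {I J : Set ℝ} {γ η : ℝ → X} {r r' : ℝ}

lemma mono (h : GeodesicOn J γ) (hIJ : I ⊆ J) : GeodesicOn I γ :=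
  fun r hr r' hr' => h r (hIJ hr) r' (hIJ hr')

lemma dist_of_le (h : GeodesicOn I γ) (hr : r ∈ I) (hr' : r' ∈ I) (hle : r ≤ r') :
    dist (γ r) (γ r') = r' - r := by
  rw [h r hr r' hr', abs_of_nonneg (sub_nonneg.2 hle)]

lemma comp_neg (h : GeodesicOn I γ) : GeodesicOn (Neg.neg ⁻¹' I) fun r => γ (-r) := by
  intro r hr r' hr'
  rw [h _ hr _ hr', neg_sub_neg, abs_sub_comm]

lemma continuousOn (h : GeodesicOn I γ) : ContinuousOn γ I := by
  refine LipschitzOnWith.continuousOn (K := 1) <|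
    LipschitzOnWith.of_dist_le_mul fun r hr r' hr' => ?_
  rw [h r hr r' hr', Real.dist_eq, abs_sub_comm, NNReal.coe_one, one_mul]

lemma continuousOn_infDist (h : GeodesicOn I γ) (A : Set X) :
    ContinuousOn (fun r => infDist (γ r) A) I :=
  (continuous_infDist_pt A).comp_continuousOn h.continuousOn

lemma isCompact_setOf_infDist_le (hI : IsCompact I) (h : GeodesicOn I γ) (A : Set X) (R : ℝ) :
    IsCompact {r ∈ I | infDist (γ r) A ≤ R} :=
  (h.continuousOn_infDist A).lowerSemicontinuousOn.isCompact_inter_preimage_Iic hI R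

lemma isProximinal_image (h : GeodesicOn I γ) (hI : IsClosed I) (hne : I.Nonempty) :
    IsProximinal (γ '' I) := by
  intro x
  obtain ⟨s, hs⟩ := hne
  have hfar : ∀ᶠ r in Filter.cocompact ℝ ⊓ Filter.principal I, dist x (γ s) ≤ dist x (γ r) := by
    refine Filter.eventually_inf_principal.2 ?_
    filter_upwards [(isCompact_closedBall s (2 * dist x (γ s))).compl_mem_cocompact] with r hr hrI
    have hsr : 2 * dist x (γ s) < dist (γ s) (γ r) := by
      rw [h s hs r hrI, ← Real.dist_eq]
      simpa only [mem_compl_iff, mem_closedBall, not_le] using hr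
    linarith [dist_triangle_left (γ s) (γ r) x]
  have hcont : ContinuousOn (fun r => dist x (γ r)) I :=
    fun r hr => tendsto_const_nhds.dist (h.continuousOn r hr)
  obtain ⟨r, hr, hmin⟩ := hcont.exists_isMinOn' hI hs hfar
  exact ⟨γ r, mem_image_of_mem γ hr, forall_mem_image.2 fun r' hr' => hmin hr'⟩

section FellowTravel

variable {p q s t w M N : ℝ}

lemma abs_length_sub_length_le (hγ : GeodesicOn I γ) (hη : GeodesicOn J η) (hs : s ∈ I)
    (ht : t ∈ I) (hst : s ≤ t) (hp : p ∈ J) (hq : q ∈ J) (hpq : p ≤ q)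
    (hps : dist (η p) (γ s) ≤ M) (hqt : dist (η q) (γ t) ≤ N) :
    |(q - p) - (t - s)| ≤ M + N := by
  rw [← hη.dist_of_le hp hq hpq, ← hγ.dist_of_le hs ht hst, ← Real.dist_eq]
  exact (dist_dist_dist_le _ _ _ _).trans (add_le_add hps hqt)

lemma dist_synchronized_le (hγ : GeodesicOn I γ) (hη : GeodesicOn (Icc p q) η) (hs : s ∈ I)
    (ht : t ∈ I) (hst : s ≤ t) (hp : dist (η p) (γ s) ≤ N) (hq : dist (η q) (γ t) ≤ N)
    (hw : w ∈ Icc p q) (hI : s + (w - p) ∈ I) (hr : r ∈ I) (hwr : dist (η w) (γ r) ≤ M) :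
    dist (η w) (γ (s + (w - p))) ≤ 2 * M + 3 * N := by
  have hpq : p ≤ q := hw.1.trans hw.2
  have hp_mem := left_mem_Icc.2 hpq
  have hq_mem := right_mem_Icc.2 hpq
  have hlen := abs_le.1 (hγ.abs_length_sub_length_le hη hs ht hst hp_mem hq_mem hpq hp hq)
  have hrs : r - s ≤ w - p + (M + N) := by
    rw [← hη.dist_of_le hp_mem hw hw.1]
    linarith [hγ s hs r hr, le_abs_self (r - s), dist_triangle4 (γ s) (η p) (η w) (γ r),
      dist_comm (γ s) (η p)]
  have htr : t - r ≤ q - w + (M + N) := by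
    rw [← hη.dist_of_le hw hq_mem hw.2]
    linarith [hγ r hr t ht, le_abs_self (t - r), dist_triangle4 (γ r) (η w) (η q) (γ t),
      dist_comm (γ r) (η w)]
  have hdist : dist (γ r) (γ (s + (w - p))) ≤ M + 3 * N := by
    have : 0 ≤ N := dist_nonneg.trans hp
    rw [hγ r hr _ hI, abs_le]
    constructor <;> linarith
  linarith [dist_triangle (η w) (γ r) (γ (s + (w - p)))]

lemma hausdorffDist_image_Icc_le (hγ : GeodesicOn I γ) (hη : GeodesicOn (Icc p q) η)
    (hpq : p ≤ q) (hst : s ≤ t) (hI : Icc s t ⊆ I) (hp : dist (η p) (γ s) ≤ N)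
    (hq : dist (η q) (γ t) ≤ N) (hnear : ∀ w ∈ Icc p q, ∃ r ∈ I, dist (η w) (γ r) ≤ M) :
    hausdorffDist (η '' Icc p q) (γ '' Icc s t) ≤ 2 * M + 3 * N := by
  have hp_mem := left_mem_Icc.2 hpq
  have hq_mem := right_mem_Icc.2 hpq
  have hs_mem := left_mem_Icc.2 hst
  have ht_mem := right_mem_Icc.2 hst
  have hlen := abs_le.1 <| hγ.abs_length_sub_length_le hη (hI hs_mem) (hI ht_mem) hst hp_mem
    hq_mem hpq hp hq
  have : 0 ≤ N := dist_nonneg.trans hp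
  have : 0 ≤ M := by
    obtain ⟨r, -, hr⟩ := hnear p hp_mem
    exact dist_nonneg.trans hr
  have hsync : ∀ w ∈ Icc p q, s + (w - p) ≤ t → dist (η w) (γ (s + (w - p))) ≤ 2 * M + 3 * N := by
    intro w hw hwt
    obtain ⟨r, hr, hwr⟩ := hnear w hw
    exact hγ.dist_synchronized_le hη (hI hs_mem) (hI ht_mem) hst hp hq hw
      (hI ⟨by linarith [hw.1], hwt⟩) hr hwr
  refine hausdorffDist_le_of_mem_dist (by linarith) (forall_mem_image.2 fun w hw => ?_)
    (forall_mem_image.2 fun τ hτ => ?_)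
  · rcases le_or_gt (s + (w - p)) t with hwt | htw
    · exact ⟨_, mem_image_of_mem γ ⟨by linarith [hw.1], hwt⟩, hsync w hw hwt⟩
    · refine ⟨_, mem_image_of_mem γ ht_mem, ?_⟩
      linarith [dist_triangle (η w) (η q) (γ t), hη.dist_of_le hw hq_mem hw.2]
  · rcases le_or_gt (p + (τ - s)) q with hτq | hqτ
    · have hw : p + (τ - s) ∈ Icc p q := ⟨by linarith [hτ.1], hτq⟩
      have hτ_eq : s + (p + (τ - s) - p) = τ := by ring
      refine ⟨_, mem_image_of_mem η hw, ?_⟩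
      rw [dist_comm]
      simpa only [hτ_eq] using hsync _ hw (hτ_eq.trans_le hτ.2)
    · refine ⟨_, mem_image_of_mem η hq_mem, ?_⟩
      linarith [dist_triangle_right (γ τ) (η q) (γ t), hγ.dist_of_le (hI hτ) (hI ht_mem) hτ.2]

lemma hausdorffDist_image_uIcc_le (hγ : GeodesicOn I γ) (hη : GeodesicOn (Icc p q) η)
    (hpq : p ≤ q) (hI : uIcc s t ⊆ I) (hp : dist (η p) (γ s) ≤ N) (hq : dist (η q) (γ t) ≤ N)
    (hnear : ∀ w ∈ Icc p q, ∃ r ∈ I, dist (η w) (γ r) ≤ M) :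
    hausdorffDist (η '' Icc p q) (γ '' uIcc s t) ≤ 2 * M + 3 * N := by
  rcases le_total s t with hst | hts
  · rw [uIcc_of_le hst] at hI ⊢
    exact hγ.hausdorffDist_image_Icc_le hη hpq hst hI hp hq hnear
  · rw [uIcc_of_ge hts] at hI ⊢
    have himage : (fun r => γ (-r)) '' Icc (-s) (-t) = γ '' Icc t s := by
      rw [← image_image γ, image_neg_Icc, neg_neg, neg_neg]
    rw [← himage]
    refine hγ.comp_neg.hausdorffDist_image_Icc_le hη hpq (neg_le_neg hts) ?_ (by rwa [neg_neg])
      (by rwa [neg_neg]) fun w hw => ?_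
    · exact fun r hr => hI ⟨le_neg_of_le_neg hr.2, neg_le_of_neg_le hr.1⟩
    · obtain ⟨r, hr, hwr⟩ := hnear w hw
      exact ⟨-r, by rwa [mem_preimage, neg_neg], by rwa [neg_neg]⟩

end FellowTravel

end GeodesicOn

namespace ContractingSet

variable {A : Set X} {C R : ℝ} {η : ℝ → X} {p q : ℝ} {x' y' : X}

lemma dist_comp_le_half_length {π : X → X} (h : ContractingSet C A) (hC : 0 ≤ C) (hR : 0 < R)
    (hCR : 2 * C ≤ R) (hπ : ∀ x, π x ∈ projSet A x) (hpq : p ≤ q) (hη : GeodesicOn (Icc p q) η)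
    (hfar : ∀ r ∈ Icc p q, R ≤ infDist (η r) A) :
    dist (π (η p)) (π (η q)) ≤ (q - p) / 2 + C := by
  have hproj : dist (π (η p)) (π (η q)) ≤ ((q - p) / R + 1) * C := by
    refine dist_le_div_add_one_mul_of_sub_lt (f := π ∘ η) hpq hR fun r hr r' hr' hlt => ?_
    refine h.dist_le hC ?_ (hπ _) (hπ _)
    rw [hη.dist_of_le hr ⟨hr.1.trans hr'.1, hr'.2⟩ hr'.1]
    exact hlt.trans_le (hfar r hr)
  have hhalf : (q - p) / R * C ≤ (q - p) / 2 := by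
    rw [div_mul_eq_mul_div, div_le_div_iff₀ hR two_pos, mul_assoc, mul_comm C]
    exact mul_le_mul_of_nonneg_left hCR (sub_nonneg.2 hpq)
  linarith

lemma dist_le_of_far_of_le (h : ContractingSet C A) (hC : 0 ≤ C) (hR : 0 < R) (hCR : 2 * C ≤ R)
    (hA : IsProximinal A) (hpq : p ≤ q) (hη : GeodesicOn (Icc p q) η)
    (hfar : ∀ r ∈ Icc p q, R ≤ infDist (η r) A) (hx' : x' ∈ projSet A (η p))
    (hy' : y' ∈ projSet A (η q)) : dist x' y' ≤ 6 * C + R := by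
  choose π hπ using hA
  have hp_mem := left_mem_Icc.2 hpq
  have hq_mem := right_mem_Icc.2 hpq
  have hlen := dist_le_infDist_add_infDist_add_dist hx' hy'
  rw [hη.dist_of_le hp_mem hq_mem hpq] at hlen
  have hRp := hfar p hp_mem
  have hRq := hfar q hq_mem
  -- Stopping `R / 2` early makes the inequality in the contraction property strict.
  set u := min q (p + infDist (η p) A - R / 2)
  set v := max u (q - infDist (η q) A + R / 2)
  have hpu : p ≤ u := le_min hpq (by linarith)
  have huq : u ≤ q := min_le_left _ _
  have huv : u ≤ v := le_max_left _ _
  have hvq : v ≤ q := max_le huq (by linarith)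
  have hxu : dist x' (π (η u)) ≤ C := by
    refine h.dist_le hC ?_ hx' (hπ _)
    rw [hη.dist_of_le hp_mem ⟨hpu, huq⟩ hpu]
    linarith [min_le_right q (p + infDist (η p) A - R / 2)]
  have hvy : dist (π (η v)) y' ≤ C := by
    rw [dist_comm]
    refine h.dist_le hC ?_ hy' (hπ _)
    rw [dist_comm, hη.dist_of_le ⟨hpu.trans huv, hvq⟩ hq_mem hvq]
    linarith [le_max_right u (q - infDist (η q) A + R / 2)]
  have huv_proj := h.dist_comp_le_half_length hC hR hCR hπ huv
    (hη.mono (Icc_subset_Icc hpu hvq)) fun r hr => hfar r ⟨hpu.trans hr.1, hr.2.trans hvq⟩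
  have huv_len : v - u ≤ dist x' y' + R := by
    have hd : 0 ≤ dist x' y' := dist_nonneg
    have hu : q - infDist (η q) A - R / 2 - dist x' y' ≤ u :=
      le_min (by linarith [hd]) (by linarith)
    have hv : v ≤ u + dist x' y' + R := max_le (by linarith [hd]) (by linarith)
    linarith
  linarith [dist_triangle4 x' (π (η u)) (π (η v)) y']

lemma dist_le_of_far (h : ContractingSet C A) (hC : 0 ≤ C) (hR : 0 < R) (hCR : 2 * C ≤ R)
    (hA : IsProximinal A) (hη : GeodesicOn (uIcc p q) η)
    (hfar : ∀ r ∈ uIcc p q, R ≤ infDist (η r) A) (hx' : x' ∈ projSet A (η p))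
    (hy' : y' ∈ projSet A (η q)) : dist x' y' ≤ 6 * C + R := by
  rcases le_total p q with hpq | hqp
  · rw [uIcc_of_le hpq] at hη hfar
    exact h.dist_le_of_far_of_le hC hR hCR hA hpq hη hfar hx' hy'
  · rw [uIcc_of_ge hqp] at hη hfar
    rw [dist_comm]
    exact h.dist_le_of_far_of_le hC hR hCR hA hqp hη hfar hy' hx'

lemma exists_infDist_le_of_lt_dist (h : ContractingSet C A) (hC : 0 ≤ C) (hR : 0 < R)
    (hCR : 2 * C ≤ R) (hA : IsProximinal A) (hpq : p ≤ q) (hη : GeodesicOn (Icc p q) η)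
    (hx' : x' ∈ projSet A (η p)) (hy' : y' ∈ projSet A (η q)) (hd : 6 * C + R < dist x' y') :
    ∃ r ∈ Icc p q, infDist (η r) A ≤ R := by
  by_contra! hfar
  exact hd.not_ge <|
    h.dist_le_of_far_of_le hC hR hCR hA hpq hη (fun r hr => (hfar r hr).le) hx' hy'

lemma dist_entry_le (h : ContractingSet C A) (hC : 0 ≤ C) (hR : 0 < R) (hCR : 2 * C ≤ R)
    (hA : IsProximinal A) (hη : GeodesicOn (uIcc p q) η)
    (hfar : ∀ r ∈ uIcc p q, R ≤ infDist (η r) A) (hx' : x' ∈ projSet A (η p))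
    (hq : infDist (η q) A ≤ R) : dist (η q) x' ≤ 6 * C + 2 * R := by
  obtain ⟨z, hz⟩ := hA (η q)
  have := h.dist_le_of_far hC hR hCR hA hη hfar hx' hz
  rw [infDist_eq_dist_of_mem_projSet hz] at hq
  linarith [dist_triangle_right (η q) x' z]

lemma dist_first_entry_le {a b : ℝ} (h : ContractingSet C A) (hC : 0 ≤ C) (hR : 0 < R)
    (hCR : 2 * C ≤ R) (hA : IsProximinal A) (hη : GeodesicOn (Icc a b) η)
    (hp : IsLeast {r ∈ Icc a b | infDist (η r) A ≤ R} p) (hx' : x' ∈ projSet A (η a)) :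
    dist (η p) x' ≤ 6 * C + 2 * R := by
  obtain ⟨⟨⟨hap, hpb⟩, hpR⟩, -⟩ := id hp
  rcases hap.eq_or_lt with rfl | hap_lt
  · rw [← infDist_eq_dist_of_mem_projSet hx']
    linarith
  · have hfar := le_on_Icc_of_isLeast_sublevel (hη.continuousOn_infDist A) hp hap_lt
    rw [← uIcc_of_le hap] at hfar
    refine h.dist_entry_le hC hR hCR hA (hη.mono ?_) hfar hx' hpR
    rw [uIcc_of_le hap]
    exact Icc_subset_Icc_right hpb

lemma dist_last_entry_le {a b : ℝ} (h : ContractingSet C A) (hC : 0 ≤ C) (hR : 0 < R)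
    (hCR : 2 * C ≤ R) (hA : IsProximinal A) (hη : GeodesicOn (Icc a b) η)
    (hq : IsGreatest {r ∈ Icc a b | infDist (η r) A ≤ R} q) (hy' : y' ∈ projSet A (η b)) :
    dist (η q) y' ≤ 6 * C + 2 * R := by
  obtain ⟨⟨⟨haq, hqb⟩, hqR⟩, -⟩ := id hq
  rcases hqb.eq_or_lt with rfl | hqb_lt
  · rw [← infDist_eq_dist_of_mem_projSet hy']
    linarith
  · have hfar := le_on_Icc_of_isGreatest_sublevel (hη.continuousOn_infDist A) hq hqb_lt
    rw [← uIcc_of_ge hqb] at hfar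
    refine h.dist_entry_le hC hR hCR hA (hη.mono ?_) hfar hy' hqR
    rw [uIcc_of_ge hqb]
    exact Icc_subset_Icc_left haq

lemma length_le_of_far (h : ContractingSet C A) (hC : 0 ≤ C) (hR : 0 < R) (hCR : 2 * C ≤ R)
    (hA : IsProximinal A) (hpq : p ≤ q) (hη : GeodesicOn (Icc p q) η)
    (hfar : ∀ r ∈ Icc p q, R ≤ infDist (η r) A) (hp : infDist (η p) A ≤ R)
    (hq : infDist (η q) A ≤ R) : q - p ≤ 6 * C + 3 * R := by
  obtain ⟨x', hx'⟩ := hA (η p)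
  obtain ⟨y', hy'⟩ := hA (η q)
  rw [← hη.dist_of_le (left_mem_Icc.2 hpq) (right_mem_Icc.2 hpq) hpq]
  linarith [dist_le_infDist_add_infDist_add_dist hx' hy',
    h.dist_le_of_far_of_le hC hR hCR hA hpq hη hfar hx' hy']

lemma infDist_le_of_infDist_endpoints_le {w : ℝ} (h : ContractingSet C A) (hC : 0 ≤ C)
    (hR : 0 < R) (hCR : 2 * C ≤ R) (hA : IsProximinal A) (hη : GeodesicOn (Icc p q) η)
    (hp : infDist (η p) A ≤ R) (hq : infDist (η q) A ≤ R) (hw : w ∈ Icc p q) :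
    infDist (η w) A ≤ 3 * C + 5 / 2 * R := by
  rcases le_or_gt (infDist (η w) A) R with hwR | hwR
  · linarith
  have hη_left := hη.mono (Icc_subset_Icc_right hw.2)
  have hη_right := hη.mono (Icc_subset_Icc_left hw.1)
  obtain ⟨u, hu⟩ := (hη_left.isCompact_setOf_infDist_le isCompact_Icc A R).exists_isGreatest
    ⟨p, left_mem_Icc.2 hw.1, hp⟩
  obtain ⟨v, hv⟩ := (hη_right.isCompact_setOf_infDist_le isCompact_Icc A R).exists_isLeast
    ⟨q, right_mem_Icc.2 hw.2, hq⟩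
  obtain ⟨⟨⟨hpu, huw⟩, huR⟩, -⟩ := id hu
  obtain ⟨⟨⟨hwv, hvq⟩, hvR⟩, -⟩ := id hv
  have huw_lt : u < w := huw.lt_of_ne fun heq => hwR.not_ge (heq ▸ huR)
  have hwv_lt : w < v := hwv.lt_of_ne fun heq => hwR.not_ge (heq ▸ hvR)
  have hfar_left := le_on_Icc_of_isGreatest_sublevel (hη_left.continuousOn_infDist A) hu huw_lt
  have hfar_right := le_on_Icc_of_isLeast_sublevel (hη_right.continuousOn_infDist A) hv hwv_lt
  have hlen : v - u ≤ 6 * C + 3 * R := by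
    refine h.length_le_of_far hC hR hCR hA (huw.trans hwv) (hη.mono (Icc_subset_Icc hpu hvq)) ?_
      huR hvR
    rw [← Icc_union_Icc_eq_Icc huw hwv]
    exact fun r hr => hr.elim (hfar_left r) (hfar_right r)
  have huw_dist := hη.dist_of_le ⟨hpu, huw.trans hw.2⟩ hw huw
  have hwv_dist := hη.dist_of_le hw ⟨hw.1.trans hwv, hvq⟩ hwv
  rw [dist_comm] at huw_dist
  linarith [infDist_le_infDist_add_dist (s := A) (x := η w) (y := η u),
    infDist_le_infDist_add_dist (s := A) (x := η w) (y := η v)]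

end ContractingSet

theorem stmt9_general {C : ℝ} (hC : 0 ≤ C) {I : Set ℝ} {γ : ℝ → X}
    (hγ : IsContractingGeodesic C I γ) {a b : ℝ} {η : ℝ → X} (hab : a ≤ b)
    (hη : GeodesicOn (Icc a b) η) {s t : ℝ} (hs : s ∈ I) (ht : t ∈ I)
    (hx' : γ s ∈ projSet (γ '' I) (η a)) (hy' : γ t ∈ projSet (γ '' I) (η b))
    (hst : 46 * C + 11 ≤ dist (γ s) (γ t)) :
    ∃ u v : ℝ, u ∈ Icc a b ∧ v ∈ Icc a b ∧ u ≤ v ∧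
      hausdorffDist (η '' Icc u v) (γ '' uIcc s t) ≤ 46 * C + 11 ∧
      ∀ w ∈ Icc a b, η w ∈ cthickening C (γ '' uIcc s t) → w ∈ Icc u v := by
  -- `46 * C + 11` is `2 * (3 * C + 5 / 2 * R) + 3 * (6 * C + 2 * R)`.
  set R := 2 * C + 1 with hR_def
  have hR : 0 < R := by positivity
  have hCR : 2 * C ≤ R := by linarith [hR_def]
  have hA := hγ.geodesic.isProximinal_image hγ.isClosed ⟨s, hs⟩
  have hI := hγ.ordConnected.uIcc_subset hs ht
  have hcpt := hη.isCompact_setOf_infDist_le isCompact_Icc (γ '' I) R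
  have hne := hγ.contracting.exists_infDist_le_of_lt_dist hC hR hCR hA hab hη hx' hy'
    (by linarith [hR_def])
  obtain ⟨u, hu⟩ := hcpt.exists_isLeast hne
  obtain ⟨v, hv⟩ := hcpt.exists_isGreatest hne
  have huv : u ≤ v := hu.2 hv.1
  have hux := hγ.contracting.dist_first_entry_le hC hR hCR hA hη hu hx'
  have hvy := hγ.contracting.dist_last_entry_le hC hR hCR hA hη hv hy'
  have hη_uv := hη.mono (Icc_subset_Icc hu.1.1.1 hv.1.1.2)
  refine ⟨u, v, hu.1.1, hv.1.1, huv, ?_, fun w hw hwC => ?_⟩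
  · have hnear : ∀ w ∈ Icc u v, ∃ r ∈ I, dist (η w) (γ r) ≤ 3 * C + 5 / 2 * R := by
      intro w hw
      obtain ⟨_, hz⟩ := hA (η w)
      obtain ⟨r, hr, rfl⟩ := hz.1
      have hwA :=
        hγ.contracting.infDist_le_of_infDist_endpoints_le hC hR hCR hA hη_uv hu.1.2 hv.1.2 hw
      exact ⟨r, hr, (infDist_eq_dist_of_mem_projSet hz).ge.trans hwA⟩
    linarith [hR_def, hγ.geodesic.hausdorffDist_image_uIcc_le hη_uv huv hI hux hvy hnear]
  · have hwA := cthickening_subset_of_subset C (image_mono hI) hwC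
    have hwR : infDist (η w) (γ '' I) ≤ R := by
      linarith [hR_def, infDist_le_of_mem_cthickening hC hwA]
    exact ⟨hu.2 ⟨hw, hwR⟩, hv.2 ⟨hw, hwR⟩⟩

end MetricSpace

theorem stmt9 (C : ℝ) (hC : 0 ≤ C) :
    ∃ C' : ℝ, ∀ (X : Type*) [MetricSpace X] [ProperSpace X], GeodesicSpace X →
      ∀ (I : Set ℝ) (γ : ℝ → X), IsContractingGeodesic C I γ →
      ∀ (x y : X) (s t : ℝ), s ∈ I → t ∈ I →
        γ s ∈ projSet (γ '' I) x → γ t ∈ projSet (γ '' I) y →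
        C' ≤ dist (γ s) (γ t) →
        ∀ (a b : ℝ) (η : ℝ → X), a ≤ b → GeodesicOn (Set.Icc a b) η → η a = x → η b = y →
          ∃ u v : ℝ, u ∈ Set.Icc a b ∧ v ∈ Set.Icc a b ∧ u ≤ v ∧
            Metric.hausdorffDist (η '' Set.Icc u v) (γ '' Set.uIcc s t) ≤ C' ∧
            ∀ w ∈ Set.Icc a b, η w ∈ Metric.cthickening C (γ '' Set.uIcc s t) →
              w ∈ Set.Icc u v := by
  refine ⟨46 * C + 11, fun X _ _ _ I γ hγ x y s t hs ht hx hy hst a b η hab hη ha hb => ?_⟩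
  exact stmt9_general hC hγ hab hη hs ht (ha ▸ hx) (hb ▸ hy) hst
end
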